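/- (Sharp weighted L² bounds for the dyadic square function; Hukovic–Treil–Volberg and Petermichl–Pott.) There are absolute constants c, C > 0 such that for every weight w on ℝ with [w]_{A_2} < ∞ (and w^{-1} locally integrable) and every f ∈ L²(w): c · [w]_{A_2}^{−1/2} · ‖f‖_{L²(w)} ≤ ( ∑_{I∈D} |⟨f,h_I⟩|² ⟨w⟩_I )^{1/2} ≤ C · [w]_{A_2} · ‖f‖_{L²(w)}. (Here (∑_{I∈D} |⟨f,h_I⟩|² ⟨w⟩_I)^{1/2} equals ‖S^D f‖_{L²(w)}, the weighted L² norm of the dyadic square function.) -/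

import Mathlib

open MeasureTheory ENNReal

noncomputable section

/-- Average of `f` over a set `I ⊆ ℝ` with respect to Lebesgue measure. -/
def iAvg (I : Set ℝ) (f : ℝ → ℝ) : ℝ :=
  (volume I).toReal⁻¹ * ∫ x in I, f x

/-- A weight on `ℝ`: locally integrable and a.e. positive. -/
def IsWeight1 (w : ℝ → ℝ) : Prop :=
  MeasureTheory.LocallyIntegrable w volume ∧ ∀ᵐ x : ℝ, 0 < w x

/-- The standard dyadic interval `[k 2^{-j}, (k+1) 2^{-j})`. -/
def dyadInt (j k : ℤ) : Set ℝ :=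
  Set.Ico ((k : ℝ) * (2:ℝ) ^ (-j)) (((k : ℝ) + 1) * (2:ℝ) ^ (-j))

/-- The Haar function `h_I = |I|^{-1/2}(1_{I_r} - 1_{I_l})` of the dyadic interval `(j,k)`. -/
def haarFn (j k : ℤ) (x : ℝ) : ℝ :=
  (Real.sqrt ((volume (dyadInt j k)).toReal))⁻¹ *
    ((dyadInt (j + 1) (2 * k + 1)).indicator (fun _ => (1:ℝ)) x -
      (dyadInt (j + 1) (2 * k)).indicator (fun _ => (1:ℝ)) x)

/-- The Haar coefficient `⟨f, h_I⟩ = ∫ f h_I`. -/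
def haarCoeff (f : ℝ → ℝ) (j k : ℤ) : ℝ := ∫ x, f x * haarFn j k x

/-- The `A₂` characteristic `[w]_{A₂} = sup_I ⟨w⟩_I ⟨w⁻¹⟩_I` over all finite intervals. -/
def a2Const (w : ℝ → ℝ) : ℝ≥0∞ :=
  ⨆ q : {q : ℝ × ℝ // q.1 < q.2}, ENNReal.ofReal
    (iAvg (Set.Ioo q.1.1 q.1.2) w * iAvg (Set.Ioo q.1.1 q.1.2) (fun x => (w x)⁻¹))

/-- The weighted `L^p` norm `(∫ |f|^p w)^(1/p)` on `ℝ`. -/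
def wNorm (p : ℝ) (w f : ℝ → ℝ) : ℝ≥0∞ :=
  (∫⁻ x, ENNReal.ofReal |f x| ^ p * ENNReal.ofReal (w x)) ^ (1/p)

open Filter
open scoped Topology

/-!
Write `x = ⟨w⟩`, `y = ⟨w⁻¹⟩`, `a = ⟨f⟩`, `F = ⟨f²w⟩` over dyadic intervals, so that `1 ≤ x y ≤ Q`
and `a² ≤ F y`. On the domain `1 ≤ x y ≤ Q` the function `B = 3 x + √(x / (y Q)) - 2 / y` is
comparable to `x`. If two points of the domain have their midpoint in it, the concavity gain of `B`
at that midpoint is at least a constant times `Q⁻¹ / x` times the square of the increment of `x`,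
and also of `B` itself.

* Lower bound: the integral of `a² B` over one generation exceeds that over any coarser one by at
  most a multiple of `Q ∑ |⟨f, h_I⟩|² ⟨w⟩_I`; the cross term between the increments of `a` and `B`
  is absorbed by the concavity gain. At fine scales the integral controls `∫ f² w`, by Lebesgue
  differentiation and Fatou's lemma. At coarse scales it tends to `0`, because the `w⁻¹`-masses of
  `[0, 2ⁿ)` and `[-2ⁿ, 0)` grow geometrically.
* Upper bound: exchange the roles of `w` and `w⁻¹` in `B`, so that `y ≤ B ≤ 3 y`. Then
  `2 F - a² / y - a² / B` lies between `0` and `2 F`, and passing to the children lowers its mean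
  by at least a multiple of `Q⁻²` times the corresponding term of the square function.
-/

theorem sqrt_one_add_le {u : ℝ} (hu : -1 ≤ u) (hu' : u ≤ 1) :
    √(1 + u) ≤ 1 + u / 2 - u ^ 2 / 16 :=
  Real.sqrt_le_iff.2 ⟨by nlinarith,
    by nlinarith [sq_nonneg (u ^ 2), mul_nonneg (sq_nonneg u) (sub_nonneg.2 hu')]⟩

theorem one_sub_sq_pos {δ : ℝ} (hδ : |δ| < 1) : 0 < 1 - δ ^ 2 :=
  sub_pos.2 ((sq_lt_one_iff_abs_lt_one δ).2 hδ)

theorem inv_one_add_add_inv_one_sub {δ : ℝ} (hδ : |δ| < 1) :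
    (1 + δ)⁻¹ + (1 - δ)⁻¹ = 2 * (1 + δ ^ 2 / (1 - δ ^ 2)) := by
  obtain ⟨hδ₁, hδ₂⟩ := abs_lt.1 hδ
  have hl : 0 < 1 + δ := by linarith
  rw [show 1 - δ ^ 2 = (1 + δ) * (1 - δ) by ring]
  field_simp
  ring

theorem inv_one_add_sub_inv_one_sub_sq {δ : ℝ} (hδ : |δ| < 1) :
    ((1 + δ)⁻¹ - (1 - δ)⁻¹) ^ 2 = 4 * (δ ^ 2 / (1 - δ ^ 2)) * ((1 + δ) * (1 - δ))⁻¹ := by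
  obtain ⟨hδ₁, hδ₂⟩ := abs_lt.1 hδ
  have hl : 0 < 1 + δ := by linarith
  rw [show 1 - δ ^ 2 = (1 + δ) * (1 - δ) by ring]
  field_simp
  ring

theorem one_le_inv_sqrt_mul_inv_sqrt {δ : ℝ} (hδ : |δ| < 1) :
    1 ≤ (√(1 + δ))⁻¹ * (√(1 - δ))⁻¹ := by
  have hδ' := one_sub_sq_pos hδ
  rw [← mul_inv, ← Real.sqrt_mul (by linarith [(abs_lt.1 hδ).1]),
    show (1 + δ) * (1 - δ) = 1 - δ ^ 2 by ring]
  exact one_le_inv_iff₀.2 ⟨Real.sqrt_pos.2 hδ', Real.sqrt_le_one.2 (by nlinarith [sq_nonneg δ])⟩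

theorem sqrt_div_add_sqrt_div_le {ε δ : ℝ} (hε : |ε| < 1) (hδ : |δ| < 1) :
    (√((1 + ε) / (1 + δ)) + √((1 - ε) / (1 - δ))) / 2
      ≤ 1 - ε ^ 2 / 32 + 3 / 2 * (δ ^ 2 / (1 - δ ^ 2)) := by
  obtain ⟨hε₁, hε₂⟩ := abs_lt.1 hε
  obtain ⟨hδ₁, hδ₂⟩ := abs_lt.1 hδ
  have hsq : (√(1 + δ))⁻¹ ^ 2 + (√(1 - δ))⁻¹ ^ 2 = 2 * (1 + δ ^ 2 / (1 - δ ^ 2)) := by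
    rw [inv_pow, inv_pow, Real.sq_sqrt (by linarith), Real.sq_sqrt (by linarith),
      inv_one_add_add_inv_one_sub hδ]
  have hpq := one_le_inv_sqrt_mul_inv_sqrt hδ
  have hD : 0 ≤ δ ^ 2 / (1 - δ ^ 2) := div_nonneg (sq_nonneg δ) (one_sub_sq_pos hδ).le
  rw [Real.sqrt_div (by linarith), Real.sqrt_div (by linarith), div_eq_mul_inv √(1 + ε),
    div_eq_mul_inv √(1 - ε)]
  have hp₀ : 0 ≤ (√(1 + δ))⁻¹ := by positivity
  have hq₀ : 0 ≤ (√(1 - δ))⁻¹ := by positivity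
  generalize (√(1 + δ))⁻¹ = p at *
  generalize (√(1 - δ))⁻¹ = q at *
  generalize δ ^ 2 / (1 - δ ^ 2) = D at *
  have hadd : p + q ≤ 2 + D := by nlinarith [sq_nonneg (p - 1), sq_nonneg (q - 1)]
  have hadd' : 2 ≤ p + q := by nlinarith [sq_nonneg (p - q)]
  have hε_add : √(1 + ε) * p ≤ (1 + ε / 2 - ε ^ 2 / 16) * p := by
    gcongr
    exact sqrt_one_add_le hε₁.le hε₂.le
  have hε_sub : √(1 - ε) * q ≤ (1 - ε / 2 - ε ^ 2 / 16) * q := by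
    gcongr
    simpa only [neg_div, neg_sq, ← sub_eq_add_neg] using
      sqrt_one_add_le (u := -ε) (by linarith) (by linarith)
  have hcross : ε / 4 * (p - q) ≤ ε ^ 2 / 32 + (p - q) ^ 2 / 2 := by
    linarith [sq_nonneg (ε / 4 - (p - q))]
  have hε_sq : ε ^ 2 / 32 * 2 ≤ ε ^ 2 / 32 * (p + q) := by gcongr
  linarith

theorem one_sub_sq_le_sqrt_div_mul_sqrt_div {ε δ : ℝ} (hε : |ε| < 1) (hδ : |δ| < 1) :
    1 - ε ^ 2 ≤ √((1 + ε) / (1 + δ)) * √((1 - ε) / (1 - δ)) := by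
  have hε' := one_sub_sq_pos hε
  have hδ' := one_sub_sq_pos hδ
  have hnonneg : 0 ≤ (1 + ε) / (1 + δ) :=
    div_nonneg (by linarith [(abs_lt.1 hε).1]) (by linarith [(abs_lt.1 hδ).1])
  rw [← Real.sqrt_mul hnonneg, div_mul_div_comm, show (1 + ε) * (1 - ε) = 1 - ε ^ 2 by ring,
    show (1 + δ) * (1 - δ) = 1 - δ ^ 2 by ring]
  apply Real.le_sqrt_of_sq_le
  rw [le_div_iff₀ hδ']
  calc (1 - ε ^ 2) ^ 2 * (1 - δ ^ 2) ≤ (1 - ε ^ 2) ^ 2 * 1 := by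
        gcongr
        linarith [sq_nonneg δ]
    _ ≤ 1 - ε ^ 2 := by nlinarith [sq_nonneg ε]

theorem sqrt_div_sub_sqrt_div_sq_le {ε δ : ℝ} (hε : |ε| < 1) (hδ : |δ| < 1) :
    (√((1 + ε) / (1 + δ)) - √((1 - ε) / (1 - δ))) ^ 2
      ≤ 3 * ε ^ 2 + 5 * (δ ^ 2 / (1 - δ ^ 2)) := by
  obtain ⟨hε₁, hε₂⟩ := abs_lt.1 hε
  obtain ⟨hδ₁, hδ₂⟩ := abs_lt.1 hδ
  have hδ' := one_sub_sq_pos hδ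
  have hprod := one_sub_sq_le_sqrt_div_mul_sqrt_div hε hδ
  have hsum : (1 + ε) / (1 + δ) + (1 - ε) / (1 - δ)
      = 2 * (1 - ε * δ) * (1 + δ ^ 2 / (1 - δ ^ 2)) := by
    have hl : 0 < 1 + δ := by linarith
    rw [show 1 - δ ^ 2 = (1 + δ) * (1 - δ) by ring]
    field_simp
    ring
  have hD : δ ^ 2 ≤ δ ^ 2 / (1 - δ ^ 2) := le_div_self (sq_nonneg δ) hδ' (by linarith [sq_nonneg δ])
  have hεδ : -(ε * δ) ≤ (ε ^ 2 + δ ^ 2) / 2 := by linarith [sq_nonneg (ε + δ)]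
  have hεδ' : -(ε * δ) ≤ 1 := by nlinarith
  rw [sub_sq, Real.sq_sqrt (div_nonneg (by linarith) (by linarith)),
    Real.sq_sqrt (div_nonneg (by linarith) (by linarith))]
  nlinarith

/-- The Bellman function of the `A₂` problem on the domain `1 ≤ x * y ≤ Q`. There it is comparable
to `x`, and it is concave with a midpoint gain controlled from below by the squared increments of
`x`, of `y` and of the function itself. -/
def bellman (Q x y : ℝ) : ℝ := 3 * x + √(x / (y * Q)) - 2 * y⁻¹

theorem div_le_sqrt_div_mul {Q x y : ℝ} (hx : 0 < x) (hy : 0 < y) (hQ : x * y ≤ Q) :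
    x / Q ≤ √(x / (y * Q)) := by
  have hQ₀ : 0 < Q := (mul_pos hx hy).trans_le hQ
  apply Real.le_sqrt_of_sq_le
  rw [div_pow, div_le_div_iff₀ (by positivity) (by positivity)]
  nlinarith [mul_pos hx hQ₀]

theorem sqrt_div_mul_le_inv {Q x y : ℝ} (hx : 0 < x) (hy : 0 < y) (hQ : x * y ≤ Q) :
    √(x / (y * Q)) ≤ y⁻¹ := by
  have hQ₀ : 0 < Q := (mul_pos hx hy).trans_le hQ
  refine Real.sqrt_le_iff.2 ⟨by positivity, ?_⟩
  rw [inv_pow, ← one_div, div_le_div_iff₀ (by positivity) (by positivity)]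
  nlinarith

theorem le_bellman {Q x y : ℝ} (hy : 0 < y) (hxy : 1 ≤ x * y) : x ≤ bellman Q x y := by
  have hinv : y⁻¹ ≤ x := (inv_le_iff_one_le_mul₀ hy).2 hxy
  have := Real.sqrt_nonneg (x / (y * Q))
  unfold bellman
  linarith

theorem bellman_le {Q x y : ℝ} (hx : 0 < x) (hy : 0 < y) (hQ : x * y ≤ Q) :
    bellman Q x y ≤ 3 * x := by
  have := sqrt_div_mul_le_inv hx hy hQ
  have : 0 < y⁻¹ := inv_pos.2 hy
  unfold bellman
  linarith

theorem bellman_mul_mul {Q x y ε δ : ℝ} (hx : 0 < x) (hy : 0 < y) (hQ : 0 < Q) :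
    bellman Q (x * (1 + ε)) (y * (1 + δ))
      = 3 * x * (1 + ε) + √(x / (y * Q)) * √((1 + ε) / (1 + δ)) - 2 * y⁻¹ * (1 + δ)⁻¹ := by
  rw [bellman, ← Real.sqrt_mul (by positivity), mul_inv]
  congr 1
  · congr 1
    · ring
    · congr 1
      field_simp
  · ring

theorem le_bellman_sub_midpoint {Q x y ε δ : ℝ} (hx : 0 < x) (hy : 0 < y) (hε : |ε| < 1)
    (hδ : |δ| < 1) (hQ : x * y ≤ Q) :
    x / Q * (ε ^ 2 / 32 + δ ^ 2 / (1 - δ ^ 2) / 2)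
      ≤ bellman Q x y
        - (bellman Q (x * (1 + ε)) (y * (1 + δ)) + bellman Q (x * (1 - ε)) (y * (1 - δ))) / 2 := by
  have hQ₀ : 0 < Q := (mul_pos hx hy).trans_le hQ
  have hsqrt := sqrt_div_add_sqrt_div_le hε hδ
  have hinv := inv_one_add_add_inv_one_sub hδ
  have hD : 0 ≤ δ ^ 2 / (1 - δ ^ 2) := div_nonneg (sq_nonneg δ) (one_sub_sq_pos hδ).le
  have hT_ge := div_le_sqrt_div_mul hx hy hQ
  have hT_le := sqrt_div_mul_le_inv hx hy hQ
  rw [sub_eq_add_neg 1 ε, sub_eq_add_neg 1 δ, bellman_mul_mul hx hy hQ₀, bellman_mul_mul hx hy hQ₀,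
    bellman, ← sub_eq_add_neg, ← sub_eq_add_neg]
  have hT₀ := Real.sqrt_nonneg (x / (y * Q))
  generalize √(x / (y * Q)) = T at *
  generalize δ ^ 2 / (1 - δ ^ 2) = D at *
  calc x / Q * (ε ^ 2 / 32 + D / 2) ≤ T * (ε ^ 2 / 32 + D / 2) := by gcongr
    _ = T * (1 - (1 - ε ^ 2 / 32 + 3 / 2 * D)) + 2 * T * D := by ring
    _ ≤ T * (1 - (√((1 + ε) / (1 + δ)) + √((1 - ε) / (1 - δ))) / 2) + 2 * y⁻¹ * D := by gcongr
    _ = _ := by linear_combination -y⁻¹ * hinv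

theorem inv_mul_inv_one_sub_sq_le {x y ε δ : ℝ} (hx : 0 < x) (hy : 0 < y) (hδ : |δ| < 1)
    (h₁ : 1 ≤ x * (1 + ε) * (y * (1 + δ))) (h₂ : 1 ≤ x * (1 - ε) * (y * (1 - δ))) :
    y⁻¹ ^ 2 * ((1 + δ) * (1 - δ))⁻¹ ≤ x ^ 2 := by
  have hδ' := one_sub_sq_pos hδ
  rw [inv_pow, ← mul_inv, show (1 + δ) * (1 - δ) = 1 - δ ^ 2 by ring,
    inv_le_iff_one_le_mul₀ (by positivity)]
  calc (1 : ℝ) ≤ x * (1 + ε) * (y * (1 + δ)) * (x * (1 - ε) * (y * (1 - δ))) :=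
        one_le_mul_of_one_le_of_one_le h₁ h₂
    _ = x ^ 2 * (y ^ 2 * (1 - δ ^ 2)) * (1 - ε ^ 2) := by ring
    _ ≤ x ^ 2 * (y ^ 2 * (1 - δ ^ 2)) * 1 := by
        gcongr
        linarith [sq_nonneg ε]
    _ = _ := mul_one _

theorem add_sub_sq_le (a b c : ℝ) : (a + b - c) ^ 2 ≤ 3 * (a ^ 2 + b ^ 2 + c ^ 2) := by
  linarith [sq_nonneg (a - b), sq_nonneg (a + c), sq_nonneg (b + c)]

theorem bellman_sub_bellman_sq_le {Q x y ε δ : ℝ} (hx : 0 < x) (hy : 0 < y) (hε : |ε| < 1)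
    (hδ : |δ| < 1) (hxy : 1 ≤ x * y) (hQ : x * y ≤ Q) (h₁ : 1 ≤ x * (1 + ε) * (y * (1 + δ)))
    (h₂ : 1 ≤ x * (1 - ε) * (y * (1 - δ))) :
    ((bellman Q (x * (1 + ε)) (y * (1 + δ)) - bellman Q (x * (1 - ε)) (y * (1 - δ))) / 2) ^ 2
      ≤ 1000 * x ^ 2 * (ε ^ 2 / 32 + δ ^ 2 / (1 - δ ^ 2) / 2) := by
  have hQ₀ : 0 < Q := (mul_pos hx hy).trans_le hQ
  have hsqrt := sqrt_div_sub_sqrt_div_sq_le hε hδ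
  have hinv := inv_one_add_sub_inv_one_sub_sq hδ
  have hyy := inv_mul_inv_one_sub_sq_le hx hy hδ h₁ h₂
  have hT : √(x / (y * Q)) ≤ x :=
    (sqrt_div_mul_le_inv hx hy hQ).trans ((inv_le_iff_one_le_mul₀ hy).2 hxy)
  have hT₀ := Real.sqrt_nonneg (x / (y * Q))
  have hD : 0 ≤ δ ^ 2 / (1 - δ ^ 2) := div_nonneg (sq_nonneg δ) (one_sub_sq_pos hδ).le
  rw [sub_eq_add_neg 1 ε, sub_eq_add_neg 1 δ, bellman_mul_mul hx hy hQ₀, bellman_mul_mul hx hy hQ₀,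
    ← sub_eq_add_neg, ← sub_eq_add_neg]
  generalize √(x / (y * Q)) = T at *
  generalize √((1 + ε) / (1 + δ)) = P at *
  generalize √((1 - ε) / (1 - δ)) = R at *
  generalize δ ^ 2 / (1 - δ ^ 2) = D at *
  have hsqrt' : (T * ((P - R) / 2)) ^ 2 ≤ x ^ 2 * ((3 * ε ^ 2 + 5 * D) / 4) := by
    rw [mul_pow, div_pow]
    gcongr
    linarith
  have hinv' : (y⁻¹ * ((1 + δ)⁻¹ - (1 - δ)⁻¹)) ^ 2 ≤ 4 * D * x ^ 2 := by
    rw [mul_pow, hinv]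
    calc _ = 4 * D * (y⁻¹ ^ 2 * ((1 + δ) * (1 - δ))⁻¹) := by ring
      _ ≤ _ := by gcongr
  calc _ = (3 * x * ε + T * ((P - R) / 2) - y⁻¹ * ((1 + δ)⁻¹ - (1 - δ)⁻¹)) ^ 2 := by ring
    _ ≤ _ := add_sub_sq_le _ _ _
    _ ≤ 3 * ((3 * x * ε) ^ 2 + x ^ 2 * ((3 * ε ^ 2 + 5 * D) / 4) + 4 * D * x ^ 2) := by gcongr
    _ ≤ _ := by linarith [mul_nonneg (sq_nonneg x) hD, mul_nonneg (sq_nonneg x) (sq_nonneg ε)]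

theorem sq_mul_midpoint_le {s s₁ s₂ K : ℝ} (hK : 0 < K)
    (hs : ((s₁ - s₂) / 2) ^ 2 ≤ K * (s - (s₁ + s₂) / 2)) (f φ : ℝ) :
    ((f + φ) ^ 2 * s₁ + (f - φ) ^ 2 * s₂) / 2 ≤ f ^ 2 * s + φ ^ 2 * (s + K) := by
  have hgain : 0 ≤ s - (s₁ + s₂) / 2 := nonneg_of_mul_nonneg_right ((sq_nonneg _).trans hs) hK
  have hcross : 2 * (f * φ * ((s₁ - s₂) / 2)) ≤ f ^ 2 * (s - (s₁ + s₂) / 2) + φ ^ 2 * K := by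
    apply le_of_sq_le_sq _ (by positivity)
    have := mul_le_mul_of_nonneg_left hs (sq_nonneg (f * φ))
    linarith [sq_nonneg (f ^ 2 * (s - (s₁ + s₂) / 2) - φ ^ 2 * K)]
  linarith [mul_nonneg (sq_nonneg φ) hgain]

theorem sq_sub_mul_div_le_mul_sq_div_midpoint {x e : ℝ} (h₁ : 0 < x + e) (h₂ : 0 < x - e)
    (f φ : ℝ) :
    (φ - f * e / x) ^ 2
      ≤ x * (((f + φ) ^ 2 / (x + e) + (f - φ) ^ 2 / (x - e)) / 2 - f ^ 2 / x) := by
  have hx : 0 < x := by linarith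
  calc (φ - f * e / x) ^ 2 = (φ * x - f * e) ^ 2 / x ^ 2 := by field_simp
    _ ≤ (φ * x - f * e) ^ 2 / ((x + e) * (x - e)) := by
        gcongr
        linarith [sq_nonneg e]
    _ = _ := by
        field_simp
        ring

theorem sq_div_midpoint_le {s₁ s₂ : ℝ} (h₁ : 0 < s₁) (h₂ : 0 < s₂) (f φ : ℝ) :
    f ^ 2 / ((s₁ + s₂) / 2) ≤ ((f + φ) ^ 2 / s₁ + (f - φ) ^ 2 / s₂) / 2 := by
  have h := sq_sub_mul_div_le_mul_sq_div_midpoint (x := (s₁ + s₂) / 2) (e := (s₁ - s₂) / 2)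
    (by linarith) (by linarith) f φ
  have := nonneg_of_mul_nonneg_right ((sq_nonneg _).trans h) (by positivity)
  rw [show (s₁ + s₂) / 2 + (s₁ - s₂) / 2 = s₁ by ring,
    show (s₁ + s₂) / 2 - (s₁ - s₂) / 2 = s₂ by ring] at this
  linarith

theorem sq_mul_gain_div_sq_le {s s₁ s₂ : ℝ} (h₁ : 0 < s₁) (h₂ : 0 < s₂) (hs : (s₁ + s₂) / 2 ≤ s)
    (f φ : ℝ) :
    f ^ 2 * (s - (s₁ + s₂) / 2) / s ^ 2
      ≤ ((f + φ) ^ 2 / s₁ + (f - φ) ^ 2 / s₂) / 2 - f ^ 2 / s := by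
  have hmean : 0 < (s₁ + s₂) / 2 := by positivity
  have hs₀ : 0 < s := hmean.trans_le hs
  calc f ^ 2 * (s - (s₁ + s₂) / 2) / s ^ 2
      ≤ f ^ 2 * (s - (s₁ + s₂) / 2) / ((s₁ + s₂) / 2 * s) := by
        have := mul_nonneg (sq_nonneg f) (sub_nonneg.2 hs)
        gcongr
        rw [sq]
        gcongr
    _ = f ^ 2 / ((s₁ + s₂) / 2) - f ^ 2 / s := by field_simp
    _ ≤ _ := sub_le_sub_right (sq_div_midpoint_le h₁ h₂ f φ) _

/- The increment `φ` splits into `φ - f * e / x`, seen by the convexity of `f ^ 2 / x`, and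
`f * e / x`, seen by the concavity gain of `s` through `f ^ 2 / s`. -/
theorem sq_le_of_midpoint_gain {x e s s₁ s₂ K M : ℝ} (hx₁ : 0 < x + e) (hx₂ : 0 < x - e)
    (h₁ : 0 < s₁) (h₂ : 0 < s₂) (hK : 0 < K) (hs : e ^ 2 ≤ K * (s - (s₁ + s₂) / 2))
    (hsx : s ≤ M * x) (f φ : ℝ) :
    φ ^ 2 ≤ 2 * (x * (((f + φ) ^ 2 / (x + e) + (f - φ) ^ 2 / (x - e)) / 2 - f ^ 2 / x))
      + 2 * (M ^ 2 * K * (((f + φ) ^ 2 / s₁ + (f - φ) ^ 2 / s₂) / 2 - f ^ 2 / s)) := by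
  have hx : 0 < x := by linarith
  have hgain : 0 ≤ s - (s₁ + s₂) / 2 := nonneg_of_mul_nonneg_right ((sq_nonneg _).trans hs) hK
  have hs₀ : 0 < s := by linarith
  have hdrift : (f * e / x) ^ 2
      ≤ M ^ 2 * K * (((f + φ) ^ 2 / s₁ + (f - φ) ^ 2 / s₂) / 2 - f ^ 2 / s) :=
    calc (f * e / x) ^ 2 = f ^ 2 * e ^ 2 / x ^ 2 := by rw [div_pow, mul_pow]
      _ ≤ f ^ 2 * (K * (s - (s₁ + s₂) / 2)) / x ^ 2 := by gcongr
      _ = K * (f ^ 2 * (s - (s₁ + s₂) / 2)) * (s ^ 2 / x ^ 2) / s ^ 2 := by field_simp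
      _ ≤ K * (f ^ 2 * (s - (s₁ + s₂) / 2)) * M ^ 2 / s ^ 2 := by
          have : 0 ≤ f ^ 2 * (s - (s₁ + s₂) / 2) := by positivity
          gcongr
          rw [div_le_iff₀ (by positivity), ← mul_pow]
          gcongr
      _ = M ^ 2 * K * (f ^ 2 * (s - (s₁ + s₂) / 2) / s ^ 2) := by ring
      _ ≤ _ := by
          gcongr
          exact sq_mul_gain_div_sq_le h₁ h₂ (by linarith) f φ
  have hφ : φ ^ 2 ≤ 2 * (φ - f * e / x) ^ 2 + 2 * (f * e / x) ^ 2 := by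
    linarith [sq_nonneg (φ - 2 * (f * e / x))]
  linarith [sq_sub_mul_div_le_mul_sq_div_midpoint hx₁ hx₂ f φ]

/-! ### Functions on the dyadic tree -/

/-- The mean of `v` over the two children of a dyadic interval. A function `v : ℤ → ℤ → ℝ` is read
as a function on the dyadic tree, with `v j k` its value at `dyadInt j k`. -/
def childMean (v : ℤ → ℤ → ℝ) (j k : ℤ) : ℝ :=
  (v (j + 1) (2 * k + 1) + v (j + 1) (2 * k)) / 2

/-- Half the difference of the values of `v` at the right and left children of a dyadic interval:
the Haar coefficient of `v`, up to normalization. -/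
def haarDiff (v : ℤ → ℤ → ℝ) (j k : ℤ) : ℝ :=
  (v (j + 1) (2 * k + 1) - v (j + 1) (2 * k)) / 2

/-- Martingales for the dyadic filtration, as functions on the dyadic tree. -/
def IsDyadicMartingale (a : ℤ → ℤ → ℝ) : Prop :=
  ∀ j k, a j k = childMean a j k

/-- The integral of the step function equal to `v j k` on each dyadic interval `dyadInt j k` of
generation `j`. Negative values of `v` are truncated to `0`. -/
def levelSum (v : ℤ → ℤ → ℝ) (j : ℤ) : ℝ≥0∞ :=
  ∑' k, ENNReal.ofReal ((2 : ℝ) ^ (-j) * v j k)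

section Tree

variable {u v : ℤ → ℤ → ℝ}

theorem IsDyadicMartingale.right_eq (hv : IsDyadicMartingale v) (j k : ℤ) :
    v (j + 1) (2 * k + 1) = v j k + haarDiff v j k := by
  rw [hv j k, childMean, haarDiff]
  ring

theorem IsDyadicMartingale.left_eq (hv : IsDyadicMartingale v) (j k : ℤ) :
    v (j + 1) (2 * k) = v j k - haarDiff v j k := by
  rw [hv j k, childMean, haarDiff]
  ring

theorem levelSum_mono {j : ℤ} (h : ∀ k, u j k ≤ v j k) : levelSum u j ≤ levelSum v j :=
  ENNReal.tsum_le_tsum fun k ↦ by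
    gcongr
    exact h k

theorem levelSum_add (hu : 0 ≤ u) (hv : 0 ≤ v) (j : ℤ) :
    levelSum (u + v) j = levelSum u j + levelSum v j := by
  rw [levelSum, levelSum, levelSum, ← ENNReal.tsum_add]
  refine tsum_congr fun k ↦ ?_
  rw [← ENNReal.ofReal_add (mul_nonneg (by positivity) (hu j k))
    (mul_nonneg (by positivity) (hv j k)), Pi.add_apply, Pi.add_apply, mul_add]

theorem levelSum_smul {c : ℝ} (hc : 0 ≤ c) (v : ℤ → ℤ → ℝ) (j : ℤ) :
    levelSum (c • v) j = ENNReal.ofReal c * levelSum v j := by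
  rw [levelSum, levelSum, ← ENNReal.tsum_mul_left]
  refine tsum_congr fun k ↦ ?_
  rw [← ENNReal.ofReal_mul hc, Pi.smul_apply, Pi.smul_apply, smul_eq_mul, mul_left_comm]

theorem tsum_int_eq_tsum_even_add_odd (g : ℤ → ℝ≥0∞) :
    ∑' k, g k = ∑' k, (g (2 * k) + g (2 * k + 1)) := by
  rw [← (Int.divModEquiv 2).symm.tsum_eq g, ENNReal.tsum_prod']
  refine tsum_congr fun k ↦ ?_
  rw [tsum_fintype, Fin.sum_univ_two]
  simp [Int.divModEquiv, mul_comm]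

theorem levelSum_childMean (hv : 0 ≤ v) (j : ℤ) :
    levelSum (childMean v) j = levelSum v (j + 1) := by
  rw [levelSum, levelSum, tsum_int_eq_tsum_even_add_odd (fun k ↦ .ofReal (2 ^ (-(j + 1)) * _))]
  refine tsum_congr fun k ↦ ?_
  have hpow : (2 : ℝ) ^ (-j) = 2 * 2 ^ (-(j + 1)) := by
    rw [show -j = -(j + 1) + 1 by ring, zpow_add_one₀ two_ne_zero, mul_comm]
  rw [← ENNReal.ofReal_add (mul_nonneg (by positivity) (hv _ _))
    (mul_nonneg (by positivity) (hv _ _)), hpow, childMean]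
  ring_nf

theorem levelSum_succ_le {g : ℤ → ℤ → ℝ} (hv : 0 ≤ v) (hg : 0 ≤ g)
    (h : ∀ j k, childMean v j k ≤ v j k + g j k) (j : ℤ) :
    levelSum v (j + 1) ≤ levelSum v j + levelSum g j := by
  rw [← levelSum_childMean hv, ← levelSum_add hv hg]
  exact levelSum_mono (h j)

theorem levelSum_succ_add_le {g : ℤ → ℤ → ℝ} (hv : 0 ≤ v) (hg : 0 ≤ g)
    (h : ∀ j k, childMean v j k + g j k ≤ v j k) (j : ℤ) :
    levelSum v (j + 1) + levelSum g j ≤ levelSum v j := by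
  have hmean : 0 ≤ childMean v := fun j k ↦ div_nonneg (add_nonneg (hv _ _) (hv _ _)) zero_le_two
  rw [← levelSum_childMean hv, ← levelSum_add hmean hg]
  exact levelSum_mono (h j)

theorem levelSum_add_sq_mul_le (a b : ℤ → ℤ → ℝ) {x : ℤ → ℤ → ℝ} (hx : 0 ≤ x) (j : ℤ) :
    levelSum ((a + b) ^ 2 * x) j ≤ 2 * levelSum (a ^ 2 * x) j + 2 * levelSum (b ^ 2 * x) j := by
  have ha : 0 ≤ a ^ 2 * x := fun j k ↦ mul_nonneg (sq_nonneg (a j k)) (hx j k)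
  have hb : 0 ≤ b ^ 2 * x := fun j k ↦ mul_nonneg (sq_nonneg (b j k)) (hx j k)
  rw [← mul_add, ← levelSum_add ha hb, ← ENNReal.ofReal_ofNat 2, ← levelSum_smul zero_le_two]
  refine levelSum_mono fun k ↦ ?_
  have := mul_le_mul_of_nonneg_right (add_sq_le (a := a j k) (b := b j k)) (hx j k)
  simpa [mul_add, add_mul, mul_assoc] using this

theorem sum_Ico_add_le {s g : ℤ → ℝ≥0∞} (h : ∀ j, s (j + 1) + g j ≤ s j) {a b : ℤ} (hab : a ≤ b) :
    ∑ i ∈ Finset.Ico a b, g i + s b ≤ s a := by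
  induction b, hab using Int.leInduction with
  | base => simp
  | succ b hab ih =>
    rw [← Finset.insert_Ico_right_eq_Ico_add_one hab, Finset.sum_insert Finset.right_notMem_Ico]
    calc g b + ∑ i ∈ Finset.Ico a b, g i + s (b + 1)
        = ∑ i ∈ Finset.Ico a b, g i + (s (b + 1) + g b) := by ring
      _ ≤ ∑ i ∈ Finset.Ico a b, g i + s b := by gcongr; exact h b
      _ ≤ s a := ih

theorem tsum_le_of_add_le {s g : ℤ → ℝ≥0∞} {B : ℝ≥0∞} (h : ∀ j, s (j + 1) + g j ≤ s j)
    (hB : ∀ j, s j ≤ B) : ∑' j, g j ≤ B := by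
  rw [ENNReal.tsum_eq_iSup_sum]
  refine iSup_le fun t ↦ ?_
  obtain ⟨a, ha⟩ := t.bddBelow
  obtain ⟨b, hb⟩ := t.bddAbove
  have ht : t ⊆ Finset.Ico a (max a (b + 1)) := fun i hi ↦
    Finset.mem_Ico.2 ⟨ha hi, lt_max_of_lt_right (Int.lt_add_one_of_le (hb hi))⟩
  calc ∑ i ∈ t, g i ≤ ∑ i ∈ Finset.Ico a (max a (b + 1)), g i := Finset.sum_le_sum_of_subset ht
    _ ≤ s a := le_self_add.trans (sum_Ico_add_le h (le_max_left _ _))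
    _ ≤ B := hB a

theorem le_add_tsum_of_le_add {s g : ℤ → ℝ≥0∞} (h : ∀ j, s (j + 1) ≤ s j + g j) {a b : ℤ}
    (hab : a ≤ b) : s b ≤ s a + ∑' j, g j := by
  have hsum : s b ≤ s a + ∑ i ∈ Finset.Ico a b, g i := by
    induction b, hab using Int.leInduction with
    | base => simp
    | succ b hab ih =>
      rw [← Finset.insert_Ico_right_eq_Ico_add_one hab, Finset.sum_insert Finset.right_notMem_Ico]
      calc s (b + 1) ≤ s b + g b := h b
        _ ≤ s a + ∑ i ∈ Finset.Ico a b, g i + g b := by gcongr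
        _ = s a + (g b + ∑ i ∈ Finset.Ico a b, g i) := by ring
  exact hsum.trans (by gcongr; exact ENNReal.sum_le_tsum _)

end Tree

/-! ### Martingale pairs with bounded product -/

/-- The martingale form of the dyadic `A₂` condition: `x` and `y` stand for the averages of a
weight and of its inverse over the dyadic intervals. -/
structure IsA2MartingalePair (Q : ℝ) (x y : ℤ → ℤ → ℝ) : Prop where
  left_martingale : IsDyadicMartingale x
  right_martingale : IsDyadicMartingale y
  left_pos : ∀ j k, 0 < x j k
  right_pos : ∀ j k, 0 < y j k
  one_le_mul : ∀ j k, 1 ≤ x j k * y j k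
  mul_le : ∀ j k, x j k * y j k ≤ Q

/-- The Bellman function evaluated along two functions on the dyadic tree. -/
def bellmanTree (Q : ℝ) (x y : ℤ → ℤ → ℝ) (j k : ℤ) : ℝ :=
  bellman Q (x j k) (y j k)

theorem IsDyadicMartingale.abs_haarDiff_div_lt_one {x : ℤ → ℤ → ℝ} (hx : IsDyadicMartingale x)
    (hpos : ∀ j k, 0 < x j k) (j k : ℤ) : |haarDiff x j k / x j k| < 1 := by
  rw [abs_div, abs_of_pos (hpos j k), div_lt_one (hpos j k), abs_lt]
  have hr := hpos (j + 1) (2 * k + 1)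
  have hl := hpos (j + 1) (2 * k)
  rw [hx.right_eq] at hr
  rw [hx.left_eq] at hl
  constructor <;> linarith

theorem IsDyadicMartingale.right_eq_mul {x : ℤ → ℤ → ℝ} (hx : IsDyadicMartingale x) {j k : ℤ}
    (hpos : 0 < x j k) : x (j + 1) (2 * k + 1) = x j k * (1 + haarDiff x j k / x j k) := by
  rw [hx.right_eq, mul_add, mul_one, mul_div_cancel₀ _ hpos.ne']

theorem IsDyadicMartingale.left_eq_mul {x : ℤ → ℤ → ℝ} (hx : IsDyadicMartingale x) {j k : ℤ}
    (hpos : 0 < x j k) : x (j + 1) (2 * k) = x j k * (1 - haarDiff x j k / x j k) := by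
  rw [hx.left_eq, mul_sub, mul_one, mul_div_cancel₀ _ hpos.ne']

namespace IsA2MartingalePair

variable {Q : ℝ} {x y a F : ℤ → ℤ → ℝ}

theorem symm (h : IsA2MartingalePair Q x y) : IsA2MartingalePair Q y x where
  left_martingale := h.right_martingale
  right_martingale := h.left_martingale
  left_pos := h.right_pos
  right_pos := h.left_pos
  one_le_mul j k := by simpa only [mul_comm] using h.one_le_mul j k
  mul_le j k := by simpa only [mul_comm] using h.mul_le j k

theorem one_le (h : IsA2MartingalePair Q x y) : 1 ≤ Q :=
  (h.one_le_mul 0 0).trans (h.mul_le 0 0)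

theorem le_bellmanTree (h : IsA2MartingalePair Q x y) (j k : ℤ) :
    x j k ≤ bellmanTree Q x y j k :=
  le_bellman (h.right_pos j k) (h.one_le_mul j k)

theorem bellmanTree_le (h : IsA2MartingalePair Q x y) (j k : ℤ) :
    bellmanTree Q x y j k ≤ 3 * x j k :=
  bellman_le (h.left_pos j k) (h.right_pos j k) (h.mul_le j k)

theorem bellmanTree_pos (h : IsA2MartingalePair Q x y) (j k : ℤ) : 0 < bellmanTree Q x y j k :=
  (h.left_pos j k).trans_le (h.le_bellmanTree j k)

theorem le_bellmanTree_sub_childMean (h : IsA2MartingalePair Q x y) (j k : ℤ) :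
    x j k / Q * ((haarDiff x j k / x j k) ^ 2 / 32
        + (haarDiff y j k / y j k) ^ 2 / (1 - (haarDiff y j k / y j k) ^ 2) / 2)
      ≤ bellmanTree Q x y j k - childMean (bellmanTree Q x y) j k := by
  have hx := h.left_pos j k
  have hy := h.right_pos j k
  simp only [childMean, bellmanTree, h.left_martingale.right_eq_mul hx,
    h.left_martingale.left_eq_mul hx, h.right_martingale.right_eq_mul hy,
    h.right_martingale.left_eq_mul hy]
  exact le_bellman_sub_midpoint hx hy (h.left_martingale.abs_haarDiff_div_lt_one h.left_pos j k)
    (h.right_martingale.abs_haarDiff_div_lt_one h.right_pos j k) (h.mul_le j k)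

theorem haarDiff_left_sq_le (h : IsA2MartingalePair Q x y) (j k : ℤ) :
    haarDiff x j k ^ 2
      ≤ 32 * Q * x j k * (bellmanTree Q x y j k - childMean (bellmanTree Q x y) j k) := by
  have hx := h.left_pos j k
  have hQ := one_pos.trans_le h.one_le
  have hδ := one_sub_sq_pos (h.right_martingale.abs_haarDiff_div_lt_one h.right_pos j k)
  calc haarDiff x j k ^ 2
      = 32 * Q * x j k * (x j k / Q * ((haarDiff x j k / x j k) ^ 2 / 32 + 0)) := by
        field_simp
        ring
    _ ≤ 32 * Q * x j k * (x j k / Q * ((haarDiff x j k / x j k) ^ 2 / 32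
        + (haarDiff y j k / y j k) ^ 2 / (1 - (haarDiff y j k / y j k) ^ 2) / 2)) := by
        gcongr
        positivity
    _ ≤ _ := by
        gcongr
        exact h.le_bellmanTree_sub_childMean j k

theorem haarDiff_bellmanTree_sq_le (h : IsA2MartingalePair Q x y) (j k : ℤ) :
    haarDiff (bellmanTree Q x y) j k ^ 2
      ≤ 1000 * Q * x j k * (bellmanTree Q x y j k - childMean (bellmanTree Q x y) j k) := by
  have hx := h.left_pos j k
  have hy := h.right_pos j k
  have hQ := one_pos.trans_le h.one_le
  have h₁ := h.one_le_mul (j + 1) (2 * k + 1)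
  have h₂ := h.one_le_mul (j + 1) (2 * k)
  rw [h.left_martingale.right_eq_mul hx, h.right_martingale.right_eq_mul hy] at h₁
  rw [h.left_martingale.left_eq_mul hx, h.right_martingale.left_eq_mul hy] at h₂
  have hdiff := bellman_sub_bellman_sq_le hx hy
    (h.left_martingale.abs_haarDiff_div_lt_one h.left_pos j k)
    (h.right_martingale.abs_haarDiff_div_lt_one h.right_pos j k)
    (h.one_le_mul j k) (h.mul_le j k) h₁ h₂
  rw [← h.left_martingale.right_eq_mul hx, ← h.right_martingale.right_eq_mul hy,
    ← h.left_martingale.left_eq_mul hx, ← h.right_martingale.left_eq_mul hy] at hdiff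
  calc haarDiff (bellmanTree Q x y) j k ^ 2
      ≤ 1000 * x j k ^ 2 * ((haarDiff x j k / x j k) ^ 2 / 32
        + (haarDiff y j k / y j k) ^ 2 / (1 - (haarDiff y j k / y j k) ^ 2) / 2) := hdiff
    _ = 1000 * Q * x j k * (x j k / Q * ((haarDiff x j k / x j k) ^ 2 / 32
        + (haarDiff y j k / y j k) ^ 2 / (1 - (haarDiff y j k / y j k) ^ 2) / 2)) := by
        field_simp
    _ ≤ _ := by
        gcongr
        exact h.le_bellmanTree_sub_childMean j k

theorem childMean_sq_mul_bellmanTree_le (h : IsA2MartingalePair Q x y) (ha : IsDyadicMartingale a)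
    (j k : ℤ) :
    childMean (a ^ 2 * bellmanTree Q x y) j k
      ≤ a j k ^ 2 * bellmanTree Q x y j k + 1003 * Q * (haarDiff a j k ^ 2 * x j k) := by
  have hx := h.left_pos j k
  have hQ := h.one_le
  have hstep := sq_mul_midpoint_le (by positivity) (h.haarDiff_bellmanTree_sq_le j k) (a j k)
    (haarDiff a j k)
  rw [← ha.right_eq, ← ha.left_eq] at hstep
  calc childMean (a ^ 2 * bellmanTree Q x y) j k
      ≤ a j k ^ 2 * bellmanTree Q x y j k
        + haarDiff a j k ^ 2 * (bellmanTree Q x y j k + 1000 * Q * x j k) := hstep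
    _ ≤ a j k ^ 2 * bellmanTree Q x y j k
        + haarDiff a j k ^ 2 * (3 * Q * x j k + 1000 * Q * x j k) := by
        gcongr
        exact (h.bellmanTree_le j k).trans (by gcongr; linarith)
    _ = _ := by ring

theorem levelSum_sq_mul_le (h : IsA2MartingalePair Q x y) (ha : IsDyadicMartingale a) {i j : ℤ}
    (hij : i ≤ j) :
    levelSum (a ^ 2 * x) j ≤ 3 * levelSum (a ^ 2 * x) i
      + ENNReal.ofReal (1003 * Q) * ∑' l, levelSum (haarDiff a ^ 2 * x) l := by
  have hQ := h.one_le
  have hv : 0 ≤ a ^ 2 * bellmanTree Q x y := fun j k ↦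
    mul_nonneg (sq_nonneg (a j k)) (h.bellmanTree_pos j k).le
  have hg : 0 ≤ (1003 * Q) • (haarDiff a ^ 2 * x) := fun j k ↦
    mul_nonneg (by positivity) (mul_nonneg (sq_nonneg (haarDiff a j k)) (h.left_pos j k).le)
  have hstep := levelSum_succ_le hv hg (h.childMean_sq_mul_bellmanTree_le ha)
  calc levelSum (a ^ 2 * x) j
      ≤ levelSum (a ^ 2 * bellmanTree Q x y) j :=
        levelSum_mono fun k ↦ mul_le_mul_of_nonneg_left (h.le_bellmanTree j k) (sq_nonneg (a j k))
    _ ≤ levelSum (a ^ 2 * bellmanTree Q x y) i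
        + ∑' l, levelSum ((1003 * Q) • (haarDiff a ^ 2 * x)) l := le_add_tsum_of_le_add hstep hij
    _ ≤ levelSum ((3 : ℝ) • (a ^ 2 * x)) i
        + ∑' l, levelSum ((1003 * Q) • (haarDiff a ^ 2 * x)) l := by
        gcongr
        refine levelSum_mono fun k ↦ ?_
        have := mul_le_mul_of_nonneg_left (h.bellmanTree_le i k) (sq_nonneg (a i k))
        simpa [mul_left_comm] using this
    _ = _ := by
        simp only [levelSum_smul (by positivity : 0 ≤ 1003 * Q), levelSum_smul zero_le_three,
          ENNReal.tsum_mul_left, ENNReal.ofReal_ofNat]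

/-- The Bellman supermartingale of the upper bound. The term `a ^ 2 / x` alone does not detect the
part of the increment of `a` that is proportional to the increment of `x`;
`a ^ 2 / bellmanTree Q x y` does. -/
def squareDeficit (Q : ℝ) (x y a F : ℤ → ℤ → ℝ) (j k : ℤ) : ℝ :=
  2 * F j k - a j k ^ 2 / x j k - a j k ^ 2 / bellmanTree Q x y j k

theorem squareDeficit_nonneg (h : IsA2MartingalePair Q x y)
    (haF : ∀ j k, a j k ^ 2 ≤ F j k * x j k) (j k : ℤ) : 0 ≤ squareDeficit Q x y a F j k := by
  have hx := h.left_pos j k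
  have hdiv : a j k ^ 2 / x j k ≤ F j k := (div_le_iff₀ hx).2 (haF j k)
  have hdiv' : a j k ^ 2 / bellmanTree Q x y j k ≤ a j k ^ 2 / x j k := by
    gcongr
    exact h.le_bellmanTree j k
  unfold squareDeficit
  linarith

theorem squareDeficit_le (h : IsA2MartingalePair Q x y) (j k : ℤ) :
    squareDeficit Q x y a F j k ≤ 2 * F j k := by
  have hx := div_nonneg (sq_nonneg (a j k)) (h.left_pos j k).le
  have hs := div_nonneg (sq_nonneg (a j k)) (h.bellmanTree_pos j k).le
  unfold squareDeficit
  linarith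

theorem haarDiff_sq_le (h : IsA2MartingalePair Q x y) (ha : IsDyadicMartingale a)
    (hF : IsDyadicMartingale F) (j k : ℤ) :
    haarDiff a j k ^ 2 ≤ 576 * Q * x j k *
      (squareDeficit Q x y a F j k - childMean (squareDeficit Q x y a F) j k) := by
  have hx := h.left_pos j k
  have hQ := one_pos.trans_le h.one_le
  have hx₁ := h.left_pos (j + 1) (2 * k + 1)
  have hx₂ := h.left_pos (j + 1) (2 * k)
  have hconvex := sq_div_midpoint_le hx₁ hx₂ (a j k) (haarDiff a j k)
  rw [← childMean, ← h.left_martingale j k, ← ha.right_eq, ← ha.left_eq] at hconvex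
  rw [h.left_martingale.right_eq] at hx₁
  rw [h.left_martingale.left_eq] at hx₂
  have hdiff := sq_le_of_midpoint_gain hx₁ hx₂ (h.bellmanTree_pos _ _) (h.bellmanTree_pos _ _)
    (by positivity) (h.haarDiff_left_sq_le j k) (h.bellmanTree_le j k) (a j k) (haarDiff a j k)
  rw [← h.left_martingale.right_eq, ← h.left_martingale.left_eq, ← ha.right_eq, ← ha.left_eq]
    at hdiff
  have hxgain := mul_nonneg hx.le (sub_nonneg.2 hconvex)
  have hQgain := mul_le_mul_of_nonneg_right h.one_le hxgain
  have hFjk := hF j k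
  simp only [squareDeficit, childMean] at hFjk hdiff ⊢
  rw [hFjk]
  linarith

theorem haarDiff_sq_mul_le (h : IsA2MartingalePair Q x y) (ha : IsDyadicMartingale a)
    (hF : IsDyadicMartingale F) (j k : ℤ) :
    haarDiff a j k ^ 2 * y j k ≤ 576 * Q ^ 2 *
      (squareDeficit Q x y a F j k - childMean (squareDeficit Q x y a F) j k) := by
  have hx := h.left_pos j k
  have hQ := one_pos.trans_le h.one_le
  have hdiff := h.haarDiff_sq_le ha hF j k
  have hgain := nonneg_of_mul_nonneg_right ((sq_nonneg _).trans hdiff) (by positivity)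
  calc haarDiff a j k ^ 2 * y j k
      ≤ 576 * Q * x j k *
        (squareDeficit Q x y a F j k - childMean (squareDeficit Q x y a F) j k) * y j k :=
        mul_le_mul_of_nonneg_right hdiff (h.right_pos j k).le
    _ = 576 * Q * (x j k * y j k) *
        (squareDeficit Q x y a F j k - childMean (squareDeficit Q x y a F) j k) := by ring
    _ ≤ 576 * Q * Q *
        (squareDeficit Q x y a F j k - childMean (squareDeficit Q x y a F) j k) := by
        gcongr
        exact h.mul_le j k
    _ = _ := by ring

theorem tsum_levelSum_haarDiff_sq_mul_le (h : IsA2MartingalePair Q x y)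
    (ha : IsDyadicMartingale a) (hF : IsDyadicMartingale F)
    (haF : ∀ j k, a j k ^ 2 ≤ F j k * x j k) {B : ℝ≥0∞} (hB : ∀ j, levelSum F j ≤ B) :
    ∑' j, levelSum (haarDiff a ^ 2 * y) j ≤ ENNReal.ofReal (1152 * Q ^ 2) * B := by
  have hV : 0 ≤ (576 * Q ^ 2) • squareDeficit Q x y a F := fun j k ↦
    mul_nonneg (by positivity) (h.squareDeficit_nonneg haF j k)
  have hg : 0 ≤ haarDiff a ^ 2 * y := fun j k ↦
    mul_nonneg (sq_nonneg (haarDiff a j k)) (h.right_pos j k).le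
  refine tsum_le_of_add_le (levelSum_succ_add_le hV hg fun j k ↦ ?_) fun j ↦ ?_
  · have := h.haarDiff_sq_mul_le ha hF j k
    simp only [childMean, Pi.smul_apply, smul_eq_mul, Pi.mul_apply, Pi.pow_apply] at this ⊢
    linarith
  · calc levelSum ((576 * Q ^ 2) • squareDeficit Q x y a F) j
        ≤ levelSum ((1152 * Q ^ 2) • F) j := levelSum_mono fun k ↦ by
          have := mul_le_mul_of_nonneg_left (h.squareDeficit_le (a := a) (F := F) j k)
            (show 0 ≤ 576 * Q ^ 2 by positivity)
          simp only [Pi.smul_apply, smul_eq_mul]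
          linarith
      _ = ENNReal.ofReal (1152 * Q ^ 2) * levelSum F j := levelSum_smul (by positivity) F j
      _ ≤ ENNReal.ofReal (1152 * Q ^ 2) * B := by
          gcongr
          exact hB j

theorem levelSum_sq_mul_le_of_sq_le (h : IsA2MartingalePair Q x y) {j : ℤ}
    (hF : ∀ k, 0 ≤ F j k) (haF : ∀ k, a j k ^ 2 ≤ F j k * y j k) :
    levelSum (a ^ 2 * x) j ≤ ENNReal.ofReal Q * levelSum F j := by
  rw [← levelSum_smul (zero_le_one.trans h.one_le)]
  refine levelSum_mono fun k ↦ ?_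
  calc a j k ^ 2 * x j k ≤ F j k * y j k * x j k :=
        mul_le_mul_of_nonneg_right (haF k) (h.left_pos j k).le
    _ = F j k * (x j k * y j k) := by ring
    _ ≤ F j k * Q := mul_le_mul_of_nonneg_left (h.mul_le j k) (hF k)
    _ = Q * F j k := mul_comm _ _

theorem right_le_mul_child (h : IsA2MartingalePair Q x y) {j k l : ℤ}
    (hl : l = 2 * k ∨ l = 2 * k + 1) : y j k ≤ 2 * Q * y (j + 1) l := by
  have hy := h.right_pos j k
  have hxl : x (j + 1) l ≤ 2 * x j k := by
    have hmean := h.left_martingale j k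
    have := h.left_pos (j + 1) (2 * k)
    have := h.left_pos (j + 1) (2 * k + 1)
    unfold childMean at hmean
    rcases hl with rfl | rfl <;> linarith
  calc y j k ≤ y j k * (x (j + 1) l * y (j + 1) l) :=
        le_mul_of_one_le_right hy.le (h.one_le_mul _ _)
    _ ≤ y j k * (2 * x j k * y (j + 1) l) := by
        have := (h.right_pos (j + 1) l).le
        gcongr
    _ = 2 * (x j k * y j k) * y (j + 1) l := by ring
    _ ≤ 2 * Q * y (j + 1) l := by
        have := (h.right_pos (j + 1) l).le
        gcongr
        exact h.mul_le j k

theorem mul_right_child_le (h : IsA2MartingalePair Q x y) {j k l : ℤ}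
    (hl : l = 2 * k ∨ l = 2 * k + 1) : (1 + (4 * Q)⁻¹) * y (j + 1) l ≤ 2 * y j k := by
  have hQ := one_pos.trans_le h.one_le
  have hmean : 2 * y j k = y (j + 1) (2 * k + 1) + y (j + 1) (2 * k) := by
    rw [h.right_martingale j k, childMean]
    ring
  have hsibling (m : ℤ) (hm : m = 2 * k ∨ m = 2 * k + 1) :
      (2 * Q)⁻¹ * y j k ≤ y (j + 1) m := by
    rw [inv_mul_le_iff₀ (by positivity)]
    exact h.right_le_mul_child hm
  have hchild : (4 * Q)⁻¹ * y (j + 1) l ≤ (2 * Q)⁻¹ * y j k := by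
    have : y (j + 1) l ≤ 2 * y j k := by
      have := h.right_pos (j + 1) (2 * k)
      have := h.right_pos (j + 1) (2 * k + 1)
      rcases hl with rfl | rfl <;> linarith
    calc (4 * Q)⁻¹ * y (j + 1) l ≤ (4 * Q)⁻¹ * (2 * y j k) := by gcongr
      _ = (2 * Q)⁻¹ * y j k := by
        field_simp
        norm_num
  have hl₀ := hsibling (2 * k) (.inl rfl)
  have hl₁ := hsibling (2 * k + 1) (.inr rfl)
  rcases hl with rfl | rfl <;> linarith

/- `c = 0` and `c = -1` are the indices fixed by passing to the parent: those of the intervals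
`[0, 2 ^ n)` and `[-2 ^ n, 0)`. -/
theorem tendsto_two_pow_mul_right (h : IsA2MartingalePair Q x y) {c : ℤ} (hc : c = 0 ∨ c = -1) :
    Tendsto (fun n : ℕ ↦ (2 : ℝ) ^ n * y (-n) c) atTop atTop := by
  have hQ := one_pos.trans_le h.one_le
  refine tendsto_atTop_of_geom_le (c := 1 + (4 * Q)⁻¹) (by simpa using h.right_pos 0 c)
    (lt_add_of_pos_right _ (by positivity)) fun n ↦ ?_
  have hgrowth := h.mul_right_child_le (j := -(n + 1)) (k := c) (l := c) (by omega)
  rw [neg_add, neg_add_cancel_right] at hgrowth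
  push_cast
  rw [neg_add]
  calc (1 + (4 * Q)⁻¹) * (2 ^ n * y (-n) c) = 2 ^ n * ((1 + (4 * Q)⁻¹) * y (-n) c) := by ring
    _ ≤ 2 ^ n * (2 * y (-n + -1) c) := by gcongr
    _ = 2 ^ (n + 1) * y (-n + -1) c := by ring

end IsA2MartingalePair

/-! ### Averages over dyadic intervals -/

theorem volume_dyadInt (j k : ℤ) : volume (dyadInt j k) = ENNReal.ofReal ((2 : ℝ) ^ (-j)) := by
  rw [dyadInt, Real.volume_Ico]
  congr 1
  ring

theorem toReal_volume_dyadInt (j k : ℤ) : (volume (dyadInt j k)).toReal = (2 : ℝ) ^ (-j) := by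
  rw [volume_dyadInt, ENNReal.toReal_ofReal (by positivity)]

theorem measurableSet_dyadInt (j k : ℤ) : MeasurableSet (dyadInt j k) := measurableSet_Ico

theorem mem_dyadInt_iff {j k : ℤ} {x : ℝ} : x ∈ dyadInt j k ↔ ⌊x * (2 : ℝ) ^ j⌋ = k := by
  have h : (0 : ℝ) < 2 ^ j := by positivity
  rw [dyadInt, Set.mem_Ico, Int.floor_eq_iff, zpow_neg, ← div_eq_mul_inv, ← div_eq_mul_inv,
    div_le_iff₀ h, lt_div_iff₀ h]

theorem iUnion_dyadInt (j : ℤ) : ⋃ k, dyadInt j k = Set.univ :=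
  Set.eq_univ_of_forall fun _ ↦ Set.mem_iUnion.2 ⟨_, mem_dyadInt_iff.2 rfl⟩

theorem pairwise_disjoint_dyadInt (j : ℤ) : Pairwise (Function.onFun Disjoint (dyadInt j)) :=
  fun _ _ hkl ↦ Set.disjoint_left.2 fun _ hk hl ↦
    hkl ((mem_dyadInt_iff.1 hk).symm.trans (mem_dyadInt_iff.1 hl))

theorem tsum_setLIntegral_dyadInt (j : ℤ) (g : ℝ → ℝ≥0∞) :
    ∑' k, ∫⁻ x in dyadInt j k, g x = ∫⁻ x, g x := by
  rw [← lintegral_iUnion (measurableSet_dyadInt j) (pairwise_disjoint_dyadInt j),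
    iUnion_dyadInt, Measure.restrict_univ]

theorem dyadInt_eq_union (j k : ℤ) :
    dyadInt j k = dyadInt (j + 1) (2 * k + 1) ∪ dyadInt (j + 1) (2 * k) := by
  have hlen : (2 : ℝ) ^ (-j) = 2 * 2 ^ (-(j + 1)) := by
    rw [show -j = -(j + 1) + 1 by ring, zpow_add_one₀ two_ne_zero, mul_comm]
  have hpos : (0 : ℝ) < 2 ^ (-(j + 1)) := by positivity
  unfold dyadInt
  rw [hlen, Set.union_comm]
  push_cast
  rw [Set.Ico_union_Ico_eq_Ico (by nlinarith) (by nlinarith)]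
  congr 1 <;> ring

theorem levelSum_eq_lintegral (v : ℤ → ℤ → ℝ) (j : ℤ) :
    levelSum v j = ∫⁻ x, ENNReal.ofReal (v j ⌊x * (2 : ℝ) ^ j⌋) := by
  rw [levelSum, ← tsum_setLIntegral_dyadInt j]
  refine tsum_congr fun k ↦ ?_
  rw [setLIntegral_congr_fun (g := fun _ ↦ ENNReal.ofReal (v j k)) (measurableSet_dyadInt j k)
    fun x hx ↦ by rw [mem_dyadInt_iff.1 hx], setLIntegral_const, volume_dyadInt,
    ENNReal.ofReal_mul (by positivity), mul_comm]

/-- The averages of `f` over the dyadic intervals, as a function on the dyadic tree. -/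
def dyadicAvg (f : ℝ → ℝ) (j k : ℤ) : ℝ :=
  iAvg (dyadInt j k) f

section Averages

variable {f g : ℝ → ℝ}

theorem dyadicAvg_eq (f : ℝ → ℝ) (j k : ℤ) :
    dyadicAvg f j k = (2 : ℝ) ^ j * ∫ x in dyadInt j k, f x := by
  rw [dyadicAvg, iAvg, toReal_volume_dyadInt, zpow_neg, inv_inv]

theorem setIntegral_dyadInt (f : ℝ → ℝ) (j k : ℤ) :
    ∫ x in dyadInt j k, f x = (2 : ℝ) ^ (-j) * dyadicAvg f j k := by
  rw [dyadicAvg_eq, ← mul_assoc, ← zpow_add₀ two_ne_zero, neg_add_cancel, zpow_zero, one_mul]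

theorem integrableOn_dyadInt (hf : LocallyIntegrable f) (j k : ℤ) :
    IntegrableOn f (dyadInt j k) :=
  (hf.integrableOn_isCompact isCompact_Icc).mono_set Set.Ico_subset_Icc_self

theorem dyadicAvg_add (hf : LocallyIntegrable f) (hg : LocallyIntegrable g) :
    dyadicAvg (f + g) = dyadicAvg f + dyadicAvg g := by
  ext j k
  simp only [Pi.add_apply, dyadicAvg_eq]
  rw [integral_add (integrableOn_dyadInt hf j k) (integrableOn_dyadInt hg j k), mul_add]

theorem dyadicAvg_one : dyadicAvg 1 = 1 := by
  ext j k
  rw [dyadicAvg, iAvg, Pi.one_def, setIntegral_const, smul_eq_mul, mul_one, measureReal_def,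
    inv_mul_cancel₀ (by rw [toReal_volume_dyadInt]; positivity), Pi.one_apply, Pi.one_apply]

theorem dyadicAvg_nonneg (hf : 0 ≤ᵐ[volume] f) (j k : ℤ) : 0 ≤ dyadicAvg f j k := by
  rw [dyadicAvg_eq]
  exact mul_nonneg (by positivity) (integral_nonneg_of_ae (ae_restrict_of_ae hf))

theorem dyadicAvg_pos (hf : LocallyIntegrable f) (hpos : ∀ᵐ x, 0 < f x) (j k : ℤ) :
    0 < dyadicAvg f j k := by
  rw [dyadicAvg_eq]
  refine mul_pos (by positivity) ?_
  rw [setIntegral_pos_iff_support_of_nonneg_ae (ae_restrict_of_ae (hpos.mono fun x hx ↦ hx.le))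
    (integrableOn_dyadInt hf j k)]
  have hsupport : Function.support f =ᵐ[volume] Set.univ :=
    eventuallyEq_univ.2 (hpos.mono fun x hx ↦ hx.ne')
  rw [measure_congr (ae_eq_set_inter hsupport (ae_eq_refl (dyadInt j k))), Set.univ_inter,
    volume_dyadInt]
  exact ENNReal.ofReal_pos.2 (by positivity)

theorem isDyadicMartingale_dyadicAvg (hf : LocallyIntegrable f) :
    IsDyadicMartingale (dyadicAvg f) := fun j k ↦ by
  rw [childMean, dyadicAvg_eq, dyadicAvg_eq, dyadicAvg_eq, dyadInt_eq_union, setIntegral_union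
    (pairwise_disjoint_dyadInt (j + 1) (by omega)) (measurableSet_dyadInt _ _)
    (integrableOn_dyadInt hf _ _) (integrableOn_dyadInt hf _ _), zpow_add_one₀ two_ne_zero]
  ring

theorem haarCoeff_eq (hf : LocallyIntegrable f) (j k : ℤ) :
    haarCoeff f j k = (√((2 : ℝ) ^ (-j)))⁻¹ *
      ((∫ x in dyadInt (j + 1) (2 * k + 1), f x) - ∫ x in dyadInt (j + 1) (2 * k), f x) := by
  have hchild (l : ℤ) : Integrable ((dyadInt (j + 1) l).indicator f) :=
    (integrable_indicator_iff (measurableSet_dyadInt _ _)).2 (integrableOn_dyadInt hf _ _)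
  rw [← integral_indicator (measurableSet_dyadInt _ _),
    ← integral_indicator (measurableSet_dyadInt _ _), ← integral_sub (hchild _) (hchild _),
    ← integral_const_mul, haarCoeff]
  refine integral_congr_ae (.of_forall fun x ↦ ?_)
  simp only [haarFn, toReal_volume_dyadInt, Set.indicator]
  split_ifs <;> ring

theorem haarCoeff_sq (hf : LocallyIntegrable f) (j k : ℤ) :
    haarCoeff f j k ^ 2 = (2 : ℝ) ^ (-j) * haarDiff (dyadicAvg f) j k ^ 2 := by
  rw [haarCoeff_eq hf, setIntegral_dyadInt, setIntegral_dyadInt, mul_pow, inv_pow,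
    Real.sq_sqrt (by positivity), neg_add, ← sub_eq_add_neg, zpow_sub_one₀ two_ne_zero, haarDiff]
  have : (2 : ℝ) ^ (-j) ≠ 0 := by positivity
  field_simp

theorem levelSum_dyadicAvg (hf : Integrable f) (hf₀ : 0 ≤ᵐ[volume] f) (j : ℤ) :
    levelSum (dyadicAvg f) j = ∫⁻ x, ENNReal.ofReal (f x) := by
  rw [← tsum_setLIntegral_dyadInt j, levelSum]
  refine tsum_congr fun k ↦ ?_
  rw [← setIntegral_dyadInt, ofReal_integral_eq_lintegral_ofReal hf.integrableOn
    (ae_restrict_of_ae hf₀)]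

theorem ae_tendsto_dyadicAvg (hf : LocallyIntegrable f) :
    ∀ᵐ x, Tendsto (fun n : ℕ ↦ dyadicAvg f n ⌊x * (2 : ℝ) ^ (n : ℤ)⌋) atTop (𝓝 (f x)) := by
  filter_upwards [IsUnifLocDoublingMeasure.ae_tendsto_average volume hf 1] with x hx
  let radius (n : ℕ) : ℝ := (2 : ℝ) ^ (-(n : ℤ)) / 2
  let center (n : ℕ) : ℝ := (⌊x * (2 : ℝ) ^ (n : ℤ)⌋ + 1 / 2) * (2 : ℝ) ^ (-(n : ℤ))
  have hradius : Tendsto radius atTop (𝓝[>] 0) := by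
    refine tendsto_nhdsWithin_iff.2 ⟨?_, .of_forall fun n ↦ Set.mem_Ioi.2 (by positivity)⟩
    have hpow : Tendsto (fun n : ℕ ↦ (2⁻¹ : ℝ) ^ n) atTop (𝓝 0) :=
      tendsto_pow_atTop_nhds_zero_of_lt_one (by norm_num) (by norm_num)
    simpa [radius] using hpow.div_const 2
  have hball (n : ℕ) : Metric.closedBall (center n) (radius n)
      = Set.Icc (⌊x * (2 : ℝ) ^ (n : ℤ)⌋ * (2 : ℝ) ^ (-(n : ℤ)))
        ((⌊x * (2 : ℝ) ^ (n : ℤ)⌋ + 1) * (2 : ℝ) ^ (-(n : ℤ))) := by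
    rw [Real.closedBall_eq_Icc]
    congr 1 <;> ring
  have hmem (n : ℕ) : x ∈ Metric.closedBall (center n) (1 * radius n) := by
    rw [one_mul, hball]
    exact Set.Ico_subset_Icc_self (mem_dyadInt_iff.2 rfl)
  refine (hx center radius hradius (.of_forall hmem)).congr fun n ↦ ?_
  rw [hball, setAverage_eq, measureReal_def, dyadicAvg, iAvg, dyadInt,
    integral_Icc_eq_integral_Ico, Real.volume_Icc, Real.volume_Ico, smul_eq_mul]

theorem lintegral_sq_mul_le_of_levelSum_le {w : ℝ → ℝ} (hf : LocallyIntegrable f)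
    (hw : LocallyIntegrable w) {B : ℝ≥0∞}
    (hB : ∀ n : ℕ, levelSum (dyadicAvg f ^ 2 * dyadicAvg w) n ≤ B) :
    ∫⁻ x, ENNReal.ofReal (f x ^ 2 * w x) ≤ B := by
  let F (n : ℕ) (x : ℝ) : ℝ≥0∞ :=
    ENNReal.ofReal ((dyadicAvg f ^ 2 * dyadicAvg w) n ⌊x * (2 : ℝ) ^ (n : ℤ)⌋)
  have hF (n : ℕ) : Measurable (F n) :=
    (measurable_of_countable fun k ↦ ENNReal.ofReal ((dyadicAvg f ^ 2 * dyadicAvg w) n k)).comp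
      (Int.measurable_floor.comp (measurable_id.mul_const _))
  have hlim : ∀ᵐ x, ENNReal.ofReal (f x ^ 2 * w x) = liminf (fun n ↦ F n x) atTop := by
    filter_upwards [ae_tendsto_dyadicAvg hf, ae_tendsto_dyadicAvg hw] with x hfx hwx
    exact (ENNReal.tendsto_ofReal ((hfx.pow 2).mul hwx)).liminf_eq.symm
  calc ∫⁻ x, ENNReal.ofReal (f x ^ 2 * w x) = ∫⁻ x, liminf (fun n ↦ F n x) atTop :=
        lintegral_congr_ae hlim
    _ ≤ liminf (fun n ↦ ∫⁻ x, F n x) atTop := lintegral_liminf_le hF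
    _ ≤ B := liminf_le_of_le (by isBoundedDefault) fun b hb ↦ by
        obtain ⟨n, hn⟩ := hb.exists
        exact (hn.trans_eq (levelSum_eq_lintegral _ _).symm).trans (hB n)

end Averages

/-! ### Dyadic `A₂` weights -/

theorem sq_integral_le_integral_sq_mul_mul_integral_inv {α : Type*} [MeasurableSpace α]
    {μ : Measure α} {f w : α → ℝ} (hpos : ∀ᵐ x ∂μ, 0 < w x) (hf : Integrable f μ)
    (hfw : Integrable (f ^ 2 * w) μ) (hw : Integrable w⁻¹ μ) :
    (∫ x, f x ∂μ) ^ 2 ≤ (∫ x, (f ^ 2 * w) x ∂μ) * ∫ x, w⁻¹ x ∂μ := by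
  have hquad (t : ℝ) : 0 ≤ (∫ x, w⁻¹ x ∂μ) * (t * t) + 2 * (∫ x, f x ∂μ) * t
      + ∫ x, (f ^ 2 * w) x ∂μ := by
    calc (0 : ℝ) ≤ ∫ x, (w⁻¹ x * (t * t) + f x * (2 * t) + (f ^ 2 * w) x) ∂μ := by
          refine integral_nonneg_of_ae (hpos.mono fun x hx ↦ ?_)
          have hsq : w⁻¹ x * (t * t) + f x * (2 * t) + (f ^ 2 * w) x
              = (f x * w x + t) ^ 2 * (w x)⁻¹ := by
            simp only [Pi.inv_apply, Pi.mul_apply, Pi.pow_apply]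
            field_simp
            ring
          exact (by positivity : 0 ≤ (f x * w x + t) ^ 2 * (w x)⁻¹).trans_eq hsq.symm
      _ = _ := by
          rw [integral_add (f := fun x ↦ w⁻¹ x * (t * t) + f x * (2 * t))
            ((hw.mul_const _).add (hf.mul_const _)) hfw,
            integral_add (hw.mul_const _) (hf.mul_const _), integral_mul_const,
            integral_mul_const]
          ring
  have := discrim_le_zero hquad
  unfold discrim at this
  linarith

/-- A weight whose `A₂` products over the dyadic intervals are bounded by `Q`. -/
structure IsDyadicA2Weight (w : ℝ → ℝ) (Q : ℝ) : Prop where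
  locallyIntegrable : LocallyIntegrable w
  locallyIntegrable_inv : LocallyIntegrable w⁻¹
  pos : ∀ᵐ x, 0 < w x
  mul_le : ∀ j k, dyadicAvg w j k * dyadicAvg w⁻¹ j k ≤ Q

/-- The squared norm of the dyadic square function of `f` in `L²(w)`. -/
def dyadicSquareSum (w f : ℝ → ℝ) : ℝ≥0∞ :=
  ∑' p : ℤ × ℤ, ENNReal.ofReal (haarCoeff f p.1 p.2 ^ 2 * iAvg (dyadInt p.1 p.2) w)

section Weights

variable {f w : ℝ → ℝ} {Q : ℝ}

theorem dyadicSquareSum_eq_tsum_levelSum (hf : LocallyIntegrable f) (w : ℝ → ℝ) :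
    dyadicSquareSum w f = ∑' j, levelSum (haarDiff (dyadicAvg f) ^ 2 * dyadicAvg w) j := by
  rw [dyadicSquareSum, ENNReal.tsum_prod']
  refine tsum_congr fun j ↦ tsum_congr fun k ↦ ?_
  rw [haarCoeff_sq hf, mul_assoc]
  rfl

theorem dyadicAvg_sq_le (hpos : ∀ᵐ x, 0 < w x) (hw : LocallyIntegrable w⁻¹)
    (hf : LocallyIntegrable f) (hfw : LocallyIntegrable (f ^ 2 * w)) (j k : ℤ) :
    dyadicAvg f j k ^ 2 ≤ dyadicAvg (f ^ 2 * w) j k * dyadicAvg w⁻¹ j k := by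
  rw [dyadicAvg_eq, dyadicAvg_eq, dyadicAvg_eq, mul_pow, mul_mul_mul_comm, ← sq]
  gcongr
  exact sq_integral_le_integral_sq_mul_mul_integral_inv (ae_restrict_of_ae hpos)
    (integrableOn_dyadInt hf j k) (integrableOn_dyadInt hfw j k) (integrableOn_dyadInt hw j k)

theorem ae_zero_le_sq_mul (hpos : ∀ᵐ x, 0 < w x) (f : ℝ → ℝ) : 0 ≤ᵐ[volume] f ^ 2 * w :=
  hpos.mono fun x hx ↦ mul_nonneg (sq_nonneg (f x)) hx.le

theorem dyadicAvg_eq_zero_of_support {m n : ℕ} (hmn : m ≤ n)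
    (hf : ∀ x ∉ Set.Ico (-(2 : ℝ) ^ m) (2 ^ m), f x = 0) {k : ℤ} (h₀ : k ≠ 0) (h₁ : k ≠ -1) :
    dyadicAvg f (-n) k = 0 := by
  rw [dyadicAvg_eq, setIntegral_eq_zero_of_forall_eq_zero, mul_zero]
  intro x hx
  refine hf x fun ⟨hleft, hright⟩ ↦ ?_
  rw [dyadInt, neg_neg, zpow_natCast] at hx
  obtain ⟨hxleft, hxright⟩ := hx
  have hmn : (2 : ℝ) ^ m ≤ 2 ^ n := pow_le_pow_right₀ one_le_two hmn
  rcases lt_or_ge k 0 with hk | hk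
  · have : (k : ℝ) + 1 ≤ -1 := by exact_mod_cast (by omega : k + 1 ≤ -1)
    nlinarith
  · have : (1 : ℝ) ≤ k := by exact_mod_cast (by omega : 1 ≤ k)
    nlinarith

theorem tendsto_setIntegral_compl_Ico_two_pow (hf : Integrable f) :
    Tendsto (fun m : ℕ ↦ ∫ x in (Set.Ico (-(2 : ℝ) ^ m) (2 ^ m))ᶜ, f x) atTop (𝓝 0) := by
  have hpow : Tendsto (fun m : ℕ ↦ (2 : ℝ) ^ m) atTop atTop :=
    tendsto_pow_atTop_atTop_of_one_lt one_lt_two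
  have hcover := aecover_Ico (μ := volume) (tendsto_neg_atTop_atBot.comp hpow) hpow
  have hlim := (hcover.integral_tendsto_of_countably_generated hf).const_sub (∫ x, f x)
  rw [sub_self] at hlim
  exact hlim.congr fun m ↦ (setIntegral_compl measurableSet_Ico hf).symm

namespace IsDyadicA2Weight

theorem inv_pos (h : IsDyadicA2Weight w Q) : ∀ᵐ x, 0 < w⁻¹ x :=
  h.pos.mono fun _ hx ↦ _root_.inv_pos.2 hx

theorem isA2MartingalePair (h : IsDyadicA2Weight w Q) :
    IsA2MartingalePair Q (dyadicAvg w) (dyadicAvg w⁻¹) where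
  left_martingale := isDyadicMartingale_dyadicAvg h.locallyIntegrable
  right_martingale := isDyadicMartingale_dyadicAvg h.locallyIntegrable_inv
  left_pos := dyadicAvg_pos h.locallyIntegrable h.pos
  right_pos := dyadicAvg_pos h.locallyIntegrable_inv h.inv_pos
  one_le_mul j k := by
    have := dyadicAvg_sq_le (f := 1) h.pos h.locallyIntegrable_inv (locallyIntegrable_const 1)
      (by simpa using h.locallyIntegrable) j k
    simpa [dyadicAvg_one] using this
  mul_le := h.mul_le

theorem dyadicSquareSum_le (h : IsDyadicA2Weight w Q) (hf : LocallyIntegrable f)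
    (hfw : Integrable (f ^ 2 * w)) :
    dyadicSquareSum w f ≤ ENNReal.ofReal (1152 * Q ^ 2) * ∫⁻ x, ENNReal.ofReal (f x ^ 2 * w x) := by
  rw [dyadicSquareSum_eq_tsum_levelSum hf]
  exact h.isA2MartingalePair.symm.tsum_levelSum_haarDiff_sq_mul_le
    (isDyadicMartingale_dyadicAvg hf) (isDyadicMartingale_dyadicAvg hfw.locallyIntegrable)
    (dyadicAvg_sq_le h.pos h.locallyIntegrable_inv hf hfw.locallyIntegrable)
    fun j ↦ (levelSum_dyadicAvg hfw (ae_zero_le_sq_mul h.pos f) j).le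

theorem levelSum_dyadicAvg_sq_mul_le (h : IsDyadicA2Weight w Q) (hf : LocallyIntegrable f)
    (hfw : Integrable (f ^ 2 * w)) (j : ℤ) :
    levelSum (dyadicAvg f ^ 2 * dyadicAvg w) j
      ≤ ENNReal.ofReal Q * ENNReal.ofReal (∫ x, (f ^ 2 * w) x) := by
  have hnonneg := ae_zero_le_sq_mul h.pos f
  rw [ofReal_integral_eq_lintegral_ofReal hfw hnonneg, ← levelSum_dyadicAvg hfw hnonneg j]
  exact h.isA2MartingalePair.levelSum_sq_mul_le_of_sq_le (dyadicAvg_nonneg hnonneg j)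
    (dyadicAvg_sq_le h.pos h.locallyIntegrable_inv hf hfw.locallyIntegrable j)

theorem two_pow_mul_dyadicAvg_sq_mul_le (h : IsDyadicA2Weight w Q) (hf : Integrable f) (n : ℕ)
    (k : ℤ) :
    2 ^ n * (dyadicAvg f (-n) k ^ 2 * dyadicAvg w (-n) k)
      ≤ (∫ x, |f x|) ^ 2 * Q / (2 ^ n * dyadicAvg w⁻¹ (-n) k) := by
  have hpair := h.isA2MartingalePair
  have hx := hpair.left_pos (-n) k
  have hy := hpair.right_pos (-n) k
  have hint : (∫ x in dyadInt (-n) k, f x) ^ 2 ≤ (∫ x, |f x|) ^ 2 :=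
    sq_le_sq.2 <| (abs_integral_le_integral_abs.trans <| setIntegral_le_integral hf.abs <|
      .of_forall fun x ↦ abs_nonneg (f x)).trans (le_abs_self _)
  rw [le_div_iff₀ (by positivity), dyadicAvg_eq f, zpow_neg, zpow_natCast]
  calc 2 ^ n * ((((2 : ℝ) ^ n)⁻¹ * ∫ x in dyadInt (-n) k, f x) ^ 2 * dyadicAvg w (-n) k)
        * (2 ^ n * dyadicAvg w⁻¹ (-n) k)
      = (∫ x in dyadInt (-n) k, f x) ^ 2 * (dyadicAvg w (-n) k * dyadicAvg w⁻¹ (-n) k) := by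
        field_simp
    _ ≤ (∫ x, |f x|) ^ 2 * Q := by
        gcongr
        exact h.mul_le (-n) k

theorem tendsto_levelSum_neg_of_support (h : IsDyadicA2Weight w Q) (hf : Integrable f) {m : ℕ}
    (hsupport : ∀ x ∉ Set.Ico (-(2 : ℝ) ^ m) (2 ^ m), f x = 0) :
    Tendsto (fun n : ℕ ↦ levelSum (dyadicAvg f ^ 2 * dyadicAvg w) (-n)) atTop (𝓝 0) := by
  let bound (k : ℤ) (n : ℕ) : ℝ≥0∞ :=
    ENNReal.ofReal ((∫ x, |f x|) ^ 2 * Q / (2 ^ n * dyadicAvg w⁻¹ (-n) k))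
  have hbound (k : ℤ) (hk : k = 0 ∨ k = -1) : Tendsto (bound k) atTop (𝓝 0) := by
    simpa using ENNReal.tendsto_ofReal
      ((h.isA2MartingalePair.tendsto_two_pow_mul_right hk).const_div_atTop _)
  have hsum : Tendsto (fun n ↦ bound 0 n + bound (-1) n) atTop (𝓝 0) := by
    simpa using (hbound 0 (.inl rfl)).add (hbound (-1) (.inr rfl))
  refine tendsto_of_tendsto_of_tendsto_of_le_of_le' tendsto_const_nhds hsum
    (.of_forall fun _ ↦ zero_le) ?_
  filter_upwards [eventually_ge_atTop m] with n hmn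
  have hterm (k : ℤ) : ENNReal.ofReal ((2 : ℝ) ^ (-(-n : ℤ)) *
      (dyadicAvg f ^ 2 * dyadicAvg w) (-n) k) ≤ bound k n := by
    rw [neg_neg, zpow_natCast]
    exact ENNReal.ofReal_le_ofReal (h.two_pow_mul_dyadicAvg_sq_mul_le hf n k)
  rw [levelSum, tsum_eq_sum (s := ({0, -1} : Finset ℤ)), Finset.sum_pair (by norm_num)]
  · exact add_le_add (hterm 0) (hterm (-1))
  · intro k hk
    simp only [Finset.mem_insert, Finset.mem_singleton, not_or] at hk
    simp [dyadicAvg_eq_zero_of_support hmn hsupport hk.1 hk.2]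

theorem levelSum_dyadicAvg_indicator_compl_le (h : IsDyadicA2Weight w Q)
    (hf : LocallyIntegrable f) (hfw : Integrable (f ^ 2 * w)) {K : Set ℝ} (hK : MeasurableSet K)
    (j : ℤ) :
    levelSum (dyadicAvg (K.indicator f) ^ 2 * dyadicAvg w) j
      ≤ ENNReal.ofReal Q * ENNReal.ofReal (∫ x in K, (f ^ 2 * w) x) := by
  have hind : K.indicator f ^ 2 * w = K.indicator (f ^ 2 * w) := by
    ext x
    by_cases hx : x ∈ K <;> simp [hx]
  rw [← integral_indicator hK, ← hind]
  exact h.levelSum_dyadicAvg_sq_mul_le (hf.indicator hK) (hind ▸ hfw.indicator hK) j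

theorem tendsto_levelSum_neg (h : IsDyadicA2Weight w Q) (hf : LocallyIntegrable f)
    (hfw : Integrable (f ^ 2 * w)) :
    Tendsto (fun n : ℕ ↦ levelSum (dyadicAvg f ^ 2 * dyadicAvg w) (-n)) atTop (𝓝 0) := by
  have hx : 0 ≤ dyadicAvg w := fun j k ↦ (h.isA2MartingalePair.left_pos j k).le
  let window (m : ℕ) : Set ℝ := Set.Ico (-(2 : ℝ) ^ m) (2 ^ m)
  have htail : Tendsto (fun m ↦ 2 * (ENNReal.ofReal Q *
      ENNReal.ofReal (∫ x in (window m)ᶜ, (f ^ 2 * w) x))) atTop (𝓝 0) := by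
    simpa using ENNReal.Tendsto.const_mul (a := 2) (ENNReal.Tendsto.const_mul
      (a := ENNReal.ofReal Q) (ENNReal.tendsto_ofReal (tendsto_setIntegral_compl_Ico_two_pow hfw))
      (.inr ENNReal.ofReal_ne_top)) (.inr ENNReal.ofNat_ne_top)
  refine ENNReal.tendsto_nhds_zero.2 fun ε hε ↦ ?_
  obtain ⟨m, hm⟩ := (ENNReal.tendsto_nhds_zero.1 htail (ε / 2) (ENNReal.half_pos hε.ne')).exists
  have hnear : Tendsto (fun n : ℕ ↦
      2 * levelSum (dyadicAvg ((window m).indicator f) ^ 2 * dyadicAvg w) (-n)) atTop (𝓝 0) := by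
    have hint : Integrable ((window m).indicator f) :=
      ((hf.integrableOn_isCompact isCompact_Icc).mono_set
        Set.Ico_subset_Icc_self).integrable_indicator measurableSet_Ico
    simpa using ENNReal.Tendsto.const_mul (a := 2)
      (h.tendsto_levelSum_neg_of_support hint fun x hx ↦ Set.indicator_of_notMem hx f)
      (.inr ENNReal.ofNat_ne_top)
  filter_upwards [ENNReal.tendsto_nhds_zero.1 hnear (ε / 2) (ENNReal.half_pos hε.ne')] with n hn
  rw [← Set.indicator_self_add_compl (window m) f,
    dyadicAvg_add (hf.indicator measurableSet_Ico) (hf.indicator measurableSet_Ico.compl)]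
  calc _ ≤ 2 * levelSum (dyadicAvg ((window m).indicator f) ^ 2 * dyadicAvg w) (-n)
        + 2 * levelSum (dyadicAvg ((window m)ᶜ.indicator f) ^ 2 * dyadicAvg w) (-n) :=
        levelSum_add_sq_mul_le _ _ hx _
    _ ≤ ε / 2 + ε / 2 := by
        refine add_le_add hn (le_trans ?_ hm)
        gcongr
        exact h.levelSum_dyadicAvg_indicator_compl_le hf hfw measurableSet_Ico.compl _
    _ = ε := ENNReal.add_halves ε

theorem lintegral_sq_mul_le (h : IsDyadicA2Weight w Q) (hf : LocallyIntegrable f)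
    (hfw : Integrable (f ^ 2 * w)) :
    ∫⁻ x, ENNReal.ofReal (f x ^ 2 * w x) ≤ ENNReal.ofReal (1003 * Q) * dyadicSquareSum w f := by
  refine lintegral_sq_mul_le_of_levelSum_le hf h.locallyIntegrable fun n ↦ ?_
  rw [dyadicSquareSum_eq_tsum_levelSum hf]
  have hcoarse : Tendsto (fun m : ℕ ↦ 3 * levelSum (dyadicAvg f ^ 2 * dyadicAvg w) (-m)
      + ENNReal.ofReal (1003 * Q)
        * ∑' l, levelSum (haarDiff (dyadicAvg f) ^ 2 * dyadicAvg w) l) atTop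
      (𝓝 (ENNReal.ofReal (1003 * Q)
        * ∑' l, levelSum (haarDiff (dyadicAvg f) ^ 2 * dyadicAvg w) l)) := by
    simpa using (ENNReal.Tendsto.const_mul (a := 3) (h.tendsto_levelSum_neg hf hfw)
      (.inr ENNReal.ofNat_ne_top)).add_const _
  exact ge_of_tendsto' hcoarse fun m ↦ h.isA2MartingalePair.levelSum_sq_mul_le
    (isDyadicMartingale_dyadicAvg hf) (by omega)

end IsDyadicA2Weight

end Weights

/-! ### Norm inequalities -/

/-- The dyadic `A₂` characteristic, the supremum of the `A₂` products over dyadic intervals only. -/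
def dyadicA2Const (w : ℝ → ℝ) : ℝ≥0∞ :=
  ⨆ p : ℤ × ℤ, ENNReal.ofReal (dyadicAvg w p.1 p.2 * dyadicAvg w⁻¹ p.1 p.2)

theorem rpow_half_le_mul_rpow_half {K H S : ℝ≥0∞} (h : S ≤ K ^ 2 * H) :
    S ^ ((1 : ℝ) / 2) ≤ K * H ^ ((1 : ℝ) / 2) := by
  calc S ^ ((1 : ℝ) / 2) ≤ (K ^ 2 * H) ^ ((1 : ℝ) / 2) := by gcongr
    _ = K * H ^ ((1 : ℝ) / 2) := by
        rw [ENNReal.mul_rpow_of_nonneg _ _ (by norm_num), ← ENNReal.rpow_natCast_mul]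
        norm_num

theorem inv_mul_rpow_neg_half_mul_rpow_half_le {K A H S : ℝ≥0∞} (hK₀ : K ≠ 0) (hK : K ≠ ⊤)
    (h : H ≤ K ^ 2 * (A * S)) :
    K⁻¹ * A ^ (-(1 / 2) : ℝ) * H ^ ((1 : ℝ) / 2) ≤ S ^ ((1 : ℝ) / 2) := by
  rw [ENNReal.rpow_neg, ← ENNReal.mul_inv (.inl hK₀) (.inl hK), mul_comm, ← div_eq_mul_inv]
  refine ENNReal.div_le_of_le_mul ?_
  calc H ^ ((1 : ℝ) / 2) ≤ K * (A * S) ^ ((1 : ℝ) / 2) := rpow_half_le_mul_rpow_half h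
    _ = S ^ ((1 : ℝ) / 2) * (K * A ^ ((1 : ℝ) / 2)) := by
        rw [ENNReal.mul_rpow_of_nonneg _ _ (by norm_num)]
        ring

section Norms

variable {f w : ℝ → ℝ}

theorem wNorm_two_eq (w f : ℝ → ℝ) :
    wNorm 2 w f = (∫⁻ x, ENNReal.ofReal (f x ^ 2 * w x)) ^ ((1 : ℝ) / 2) := by
  unfold wNorm
  congr 1
  refine lintegral_congr fun x ↦ ?_
  rw [ENNReal.ofReal_rpow_of_nonneg (abs_nonneg _) zero_le_two, Real.rpow_two, sq_abs,
    ENNReal.ofReal_mul (sq_nonneg _)]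

theorem integrable_sq_mul_of_wNorm_lt_top (hw : IsWeight1 w) (hf : AEMeasurable f)
    (h : wNorm 2 w f < ⊤) : Integrable (f ^ 2 * w) := by
  rw [wNorm_two_eq, ENNReal.rpow_lt_top_iff_of_pos (by norm_num)] at h
  refine ⟨(hf.pow_const 2).aestronglyMeasurable.mul hw.1.aestronglyMeasurable, ?_⟩
  rwa [hasFiniteIntegral_iff_ofReal (ae_zero_le_sq_mul hw.2 f)]

theorem locallyIntegrable_of_integrable_sq_mul (hpos : ∀ᵐ x, 0 < w x)
    (hw : LocallyIntegrable w⁻¹) (hf : AEMeasurable f) (hfw : Integrable (f ^ 2 * w)) :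
    LocallyIntegrable f := by
  refine (hfw.locallyIntegrable.add hw).mono hf.aestronglyMeasurable (hpos.mono fun x hx ↦ ?_)
  have hsq : f x ^ 2 * w x + (w x)⁻¹ - 2 * |f x| = (w x)⁻¹ * (|f x| * w x - 1) ^ 2 := by
    rw [← sq_abs (f x)]
    field_simp
    ring
  have hnonneg : 0 ≤ (w x)⁻¹ * (|f x| * w x - 1) ^ 2 := by positivity
  have habs := abs_nonneg (f x)
  calc ‖f x‖ ≤ f x ^ 2 * w x + (w x)⁻¹ := by
        rw [Real.norm_eq_abs]
        linarith
    _ ≤ ‖(f ^ 2 * w + w⁻¹) x‖ := Real.le_norm_self _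

theorem dyadicSquareSum_eq_zero_of_wNorm_eq_zero (hw : IsWeight1 w) (hf : AEMeasurable f)
    (h : wNorm 2 w f = 0) : dyadicSquareSum w f = 0 := by
  have hmeas : AEMeasurable fun x ↦ ENNReal.ofReal (f x ^ 2 * w x) :=
    ((hf.pow_const 2).mul hw.1.aestronglyMeasurable.aemeasurable).ennreal_ofReal
  rw [wNorm_two_eq, ENNReal.rpow_eq_zero_iff_of_pos (by norm_num),
    lintegral_eq_zero_iff' hmeas] at h
  have hf₀ : f =ᵐ[volume] 0 := by
    filter_upwards [h, hw.2] with x hx hwx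
    exact pow_eq_zero_iff two_ne_zero |>.1 <|
      le_antisymm (nonpos_of_mul_nonpos_left (ENNReal.ofReal_eq_zero.1 hx) hwx) (sq_nonneg _)
  have hcoeff (j k : ℤ) : haarCoeff f j k = 0 :=
    integral_eq_zero_of_ae (hf₀.mono fun x hx ↦ by simp [hx])
  simp [dyadicSquareSum, hcoeff]

theorem isDyadicA2Weight_toReal_dyadicA2Const (hw : IsWeight1 w) (hw' : LocallyIntegrable w⁻¹)
    (hA : dyadicA2Const w ≠ ⊤) : IsDyadicA2Weight w (dyadicA2Const w).toReal where
  locallyIntegrable := hw.1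
  locallyIntegrable_inv := hw'
  pos := hw.2
  mul_le j k := (ENNReal.ofReal_le_iff_le_toReal hA).1 <|
    le_iSup (fun p : ℤ × ℤ ↦ ENNReal.ofReal (dyadicAvg w p.1 p.2 * dyadicAvg w⁻¹ p.1 p.2)) (j, k)

theorem dyadicAvg_eq_iAvg_Ioo (f : ℝ → ℝ) (j k : ℤ) :
    dyadicAvg f j k = iAvg (Set.Ioo (k * (2 : ℝ) ^ (-j)) ((k + 1) * (2 : ℝ) ^ (-j))) f := by
  unfold dyadicAvg iAvg dyadInt
  rw [Real.volume_Ico, Real.volume_Ioo, integral_Ico_eq_integral_Ioo]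

theorem dyadicA2Const_le_a2Const (w : ℝ → ℝ) : dyadicA2Const w ≤ a2Const w := by
  refine iSup_le fun ⟨j, k⟩ ↦ ?_
  have hlen : (0 : ℝ) < 2 ^ (-j) := by positivity
  have hlt : (k : ℝ) * 2 ^ (-j) < (k + 1) * 2 ^ (-j) := by linarith
  rw [dyadicAvg_eq_iAvg_Ioo, dyadicAvg_eq_iAvg_Ioo]
  exact le_iSup (fun q : {q : ℝ × ℝ // q.1 < q.2} ↦ ENNReal.ofReal
    (iAvg (Set.Ioo q.1.1 q.1.2) w * iAvg (Set.Ioo q.1.1 q.1.2) w⁻¹)) ⟨(_, _), hlt⟩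

theorem mul_wNorm_le_dyadicSquareSum_rpow_half (hw : IsWeight1 w) (hw' : LocallyIntegrable w⁻¹)
    (hf : AEMeasurable f) (h : wNorm 2 w f < ⊤) :
    32⁻¹ * dyadicA2Const w ^ (-(1 / 2) : ℝ) * wNorm 2 w f
      ≤ dyadicSquareSum w f ^ ((1 : ℝ) / 2) := by
  by_cases hA : dyadicA2Const w = ⊤
  · rw [hA, ENNReal.top_rpow_of_neg (by norm_num), mul_zero, zero_mul]
    exact zero_le
  have hfw := integrable_sq_mul_of_wNorm_lt_top hw hf h
  rw [wNorm_two_eq]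
  refine inv_mul_rpow_neg_half_mul_rpow_half_le (by norm_num) (by norm_num) ?_
  calc ∫⁻ x, ENNReal.ofReal (f x ^ 2 * w x)
      ≤ ENNReal.ofReal (1003 * (dyadicA2Const w).toReal) * dyadicSquareSum w f :=
        (isDyadicA2Weight_toReal_dyadicA2Const hw hw' hA).lintegral_sq_mul_le
          (locallyIntegrable_of_integrable_sq_mul hw.2 hw' hf hfw) hfw
    _ = 1003 * (dyadicA2Const w * dyadicSquareSum w f) := by
        rw [ENNReal.ofReal_mul (by norm_num), ENNReal.ofReal_toReal hA, ENNReal.ofReal_ofNat,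
          mul_assoc]
    _ ≤ 32 ^ 2 * (dyadicA2Const w * dyadicSquareSum w f) := by
        gcongr
        norm_num

theorem dyadicSquareSum_rpow_half_le_mul_wNorm (hw : IsWeight1 w) (hw' : LocallyIntegrable w⁻¹)
    (hf : AEMeasurable f) (h : wNorm 2 w f < ⊤) :
    dyadicSquareSum w f ^ ((1 : ℝ) / 2) ≤ 34 * dyadicA2Const w * wNorm 2 w f := by
  by_cases hf₀ : wNorm 2 w f = 0
  · simp [dyadicSquareSum_eq_zero_of_wNorm_eq_zero hw hf hf₀]
  by_cases hA : dyadicA2Const w = ⊤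
  · simp [hA, hf₀]
  have hfw := integrable_sq_mul_of_wNorm_lt_top hw hf h
  rw [wNorm_two_eq]
  refine rpow_half_le_mul_rpow_half ?_
  calc dyadicSquareSum w f
      ≤ ENNReal.ofReal (1152 * (dyadicA2Const w).toReal ^ 2)
        * ∫⁻ x, ENNReal.ofReal (f x ^ 2 * w x) :=
        (isDyadicA2Weight_toReal_dyadicA2Const hw hw' hA).dyadicSquareSum_le
          (locallyIntegrable_of_integrable_sq_mul hw.2 hw' hf hfw) hfw
    _ = 1152 * dyadicA2Const w ^ 2 * ∫⁻ x, ENNReal.ofReal (f x ^ 2 * w x) := by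
        rw [ENNReal.ofReal_mul (by norm_num), ENNReal.ofReal_pow ENNReal.toReal_nonneg,
          ENNReal.ofReal_toReal hA, ENNReal.ofReal_ofNat]
    _ ≤ (34 * dyadicA2Const w) ^ 2 * ∫⁻ x, ENNReal.ofReal (f x ^ 2 * w x) := by
        rw [mul_pow]
        gcongr
        norm_num

end Norms

theorem dyadic_square_function_sharp_bounds_general :
    ∃ c C : ℝ, 0 < c ∧ 0 < C ∧
      ∀ w f : ℝ → ℝ, IsWeight1 w → LocallyIntegrable w⁻¹ → AEMeasurable f → wNorm 2 w f < ⊤ →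
        ENNReal.ofReal c * dyadicA2Const w ^ (-(1 / 2) : ℝ) * wNorm 2 w f
            ≤ dyadicSquareSum w f ^ ((1 : ℝ) / 2) ∧
        dyadicSquareSum w f ^ ((1 : ℝ) / 2)
          ≤ ENNReal.ofReal C * dyadicA2Const w * wNorm 2 w f := by
  refine ⟨32⁻¹, 34, by norm_num, by norm_num, fun w f hw hw' hf h ↦ ⟨?_, ?_⟩⟩
  · rw [ENNReal.ofReal_inv_of_pos (by norm_num), ENNReal.ofReal_ofNat]
    exact mul_wNorm_le_dyadicSquareSum_rpow_half hw hw' hf h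
  · rw [ENNReal.ofReal_ofNat]
    exact dyadicSquareSum_rpow_half_le_mul_wNorm hw hw' hf h

/-- **sharp weighted `L²` bounds for the dyadic square function;
Hukovic–Treil–Volberg, Petermichl–Pott.** There are absolute constants `c, C > 0` with
`c [w]_{A₂}^{-1/2} ‖f‖_{L²(w)} ≤ (∑_{I∈D} |⟨f,h_I⟩|² ⟨w⟩_I)^{1/2} ≤ C [w]_{A₂} ‖f‖_{L²(w)}`
for every `w ∈ A₂` and `f ∈ L²(w)`. -/
theorem dyadic_square_function_sharp_bounds :
    ∃ c C : ℝ, 0 < c ∧ 0 < C ∧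
      ∀ w f : ℝ → ℝ,
        IsWeight1 w → MeasureTheory.LocallyIntegrable (fun x => (w x)⁻¹) volume →
        a2Const w < ⊤ →
        Measurable f → wNorm 2 w f < ⊤ →
        ENNReal.ofReal c * a2Const w ^ (-(1/2) : ℝ) * wNorm 2 w f
            ≤ (∑' p : ℤ × ℤ,
                ENNReal.ofReal ((haarCoeff f p.1 p.2) ^ 2 * iAvg (dyadInt p.1 p.2) w))
                ^ ((1:ℝ)/2) ∧
        (∑' p : ℤ × ℤ,
            ENNReal.ofReal ((haarCoeff f p.1 p.2) ^ 2 * iAvg (dyadInt p.1 p.2) w))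
            ^ ((1:ℝ)/2)
          ≤ ENNReal.ofReal C * a2Const w * wNorm 2 w f := by
  obtain ⟨c, C, hc, hC, hbounds⟩ := dyadic_square_function_sharp_bounds_general
  refine ⟨c, C, hc, hC, fun w f hw hw' _ hf h ↦ ?_⟩
  obtain ⟨hlower, hupper⟩ := hbounds w f hw hw' hf.aemeasurable h
  have hA := dyadicA2Const_le_a2Const w
  refine ⟨le_trans ?_ hlower, hupper.trans (by gcongr)⟩
  rw [ENNReal.rpow_neg, ENNReal.rpow_neg]
  gcongr

end
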